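/- arXiv:1501.03377 — 3 statements merged into one kernel-verified Lean document; each statement's English description precedes it below -/
import Mathlib

section
/- Let (G,x,y) encode a reflexive regular map that is simple and satisfies 2q² > |G| (density exceeding 1/2), and suppose q is odd. Then (G,x,y) is the tetrahedral map tet; in particular q = 3, |G| = 12, and the density equals 3/4. -/
namespace RegularMap

variable {G : Type*} [Group G]

/-- The vertex set of the map: left cosets of the cyclic subgroup generated by `y`. -/
abbrev Vertex (y : G) : Type _ := G ⧸ Subgroup.zpowers y

/-- The rotation about the vertex `v = g⟨y⟩`, namely `g * y * g⁻¹`. -/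
def rot (y : G) (v : Vertex y) : G :=
  Quotient.liftOn' v (fun g => g * y * g⁻¹) (by
    intro a b h
    obtain ⟨k, hk⟩ := QuotientGroup.leftRel_apply.mp h
    have hk' : y ^ k = a⁻¹ * b := hk
    have hb : b = a * y ^ k := by rw [hk']; group
    subst hb
    group)

/-- Two vertices are adjacent iff they are distinct and form the endpoint pair of
some edge `g⟨x*y⟩`, whose endpoints are `g⟨y⟩` and `g*x*y⟨y⟩`. -/
def Adj (x y : G) (v w : Vertex y) : Prop :=
  v ≠ w ∧ ∃ g : G,
    ({v, w} : Set (Vertex y)) = {QuotientGroup.mk g, QuotientGroup.mk (g * x * y)}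

/-- The map is simple: no edge has equal endpoints, and distinct edges (left cosets
of `⟨x*y⟩`) have distinct endpoint pairs. -/
def IsSimple (x y : G) : Prop :=
  (∀ g : G, (QuotientGroup.mk g : Vertex y) ≠ QuotientGroup.mk (g * x * y)) ∧
  ∀ g h : G,
    ({QuotientGroup.mk g, QuotientGroup.mk (g * x * y)} : Set (Vertex y)) =
      {QuotientGroup.mk h, QuotientGroup.mk (h * x * y)} →
    (QuotientGroup.mk g : G ⧸ Subgroup.zpowers (x * y)) = QuotientGroup.mk h

/-- The map is reflexive: some group automorphism inverts both `x` and `y`. -/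
def IsReflexive (x y : G) : Prop :=
  ∃ σ : G ≃* G, σ x = x⁻¹ ∧ σ y = y⁻¹

/-- An automorphism of the map (given a reflection σ): either orientation preserving,
`g⟨y⟩ ↦ a*g⟨y⟩`, or orientation reversing, `g⟨y⟩ ↦ a*σ(g)⟨y⟩`. -/
def IsMapAut (y : G) (σ : G ≃* G) (φ : Vertex y → Vertex y) : Prop :=
  (∃ a : G, ∀ g : G, φ (QuotientGroup.mk g) = QuotientGroup.mk (a * g)) ∨
  (∃ a : G, ∀ g : G, φ (QuotientGroup.mk g) = QuotientGroup.mk (a * σ g))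

/-- `v'` is a diagonal neighbour of `v`: `v' = S_w² • v` for some vertex `w` adjacent to `v`. -/
def DiagNeighbor (x y : G) (v v' : Vertex y) : Prop :=
  ∃ w : Vertex y, Adj x y v w ∧ v' = rot y w ^ 2 • v

/-- Diagonal alignment: the reflexive-transitive closure of the diagonal-neighbour relation. -/
def Aligned (x y : G) : Vertex y → Vertex y → Prop :=
  Relation.ReflTransGen (DiagNeighbor x y)

/-- The primitive period `J`: the least `j ≥ 1` such that `S_v^j` fixes every vertex
diagonally aligned with `v` (this is independent of `v`). -/
noncomputable def primPeriod (x y : G) : ℕ :=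
  sInf {j : ℕ | 1 ≤ j ∧ ∀ v v' : Vertex y, Aligned x y v v' → rot y v ^ j • v' = v'}

/-- The even period `T = lcm(J, 2)`. -/
noncomputable def evenPeriod (x y : G) : ℕ := Nat.lcm (primPeriod x y) 2

/-- Relators of the tetrahedral group ⟨X,Y ∣ X³, Y³, (XY)²⟩. -/
def tetRels : Set (FreeGroup (Fin 2)) :=
  {FreeGroup.of 0 ^ 3, FreeGroup.of 1 ^ 3, (FreeGroup.of 0 * FreeGroup.of 1) ^ 2}

/-- Relators of the Fermat group ⟨X,Y ∣ X³, Y^(2n), (XY)², [X,Y]³⟩. -/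
def fermatRels (n : ℕ) : Set (FreeGroup (Fin 2)) :=
  {FreeGroup.of 0 ^ 3, FreeGroup.of 1 ^ (2 * n), (FreeGroup.of 0 * FreeGroup.of 1) ^ 2,
    (FreeGroup.of 0 * FreeGroup.of 1 * (FreeGroup.of 0)⁻¹ * (FreeGroup.of 1)⁻¹) ^ 3}

/-- `(G,x,y)` is the tetrahedral map: the canonical homomorphism from the presented
group ⟨X,Y ∣ X³, Y³, (XY)²⟩ sending X to x and Y to y is an isomorphism. -/
def IsTet (G : Type*) [Group G] (x y : G) : Prop :=
  ∃ e : PresentedGroup tetRels ≃* G,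
    e (PresentedGroup.of 0) = x ∧ e (PresentedGroup.of 1) = y

/-- `(G,x,y)` is the Fermat map `Fer(n)`: the canonical homomorphism from the Fermat
group `G_n` sending X to x and Y to y is an isomorphism. -/
def IsFermat (n : ℕ) (G : Type*) [Group G] (x y : G) : Prop :=
  ∃ e : PresentedGroup (fermatRels n) ≃* G,
    e (PresentedGroup.of 0) = x ∧ e (PresentedGroup.of 1) = y

/-!
Let `A = ⟨y⟩` and `t = x * y`, an involution. Simplicity gives `A ∩ tAt⁻¹ = 1`, so the double coset
`AtA` has `q²` elements, more than half of `G`. Hence `AtA` contains every `g` with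
`A ∩ gAg⁻¹ = 1`, and it meets its translate by `t`, that is, `tat ∈ AtA` for some `a ∈ A`.

Let `z` generate `A` and put `g = tzt⁻¹`. As `A` is cyclic, `g` normalizes `K = A ∩ gAg⁻¹`; so
does its power `tat⁻¹ ∈ AtA`, and so does `A`, hence also `t`. Thus `K ≤ A ∩ tAt⁻¹ = 1` and
`tzt ∈ AtA`; the reflection then forces `tzt = z⁻¹tz⁻¹`. Since `q` is odd this holds for `z = y`,
where it says `x³ = 1`, and for `z = y²`, which together give `y³ = 1`. Finally these relations
imply `G = A ∪ AtA`, a set of `3 + 3²` elements.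
-/

section DoubleCosets

open DoubleCoset
open scoped Pointwise

variable {H K A : Subgroup G} {g t : G}

lemma disjoint_conj_smul_iff :
    Disjoint H (MulAut.conj g • K) ↔ ∀ h ∈ H, g⁻¹ * h * g ∈ K → h = 1 := by
  simp only [Subgroup.disjoint_def, Subgroup.mem_pointwise_smul_iff_inv_smul_mem, ← map_inv,
    MulAut.smul_def, MulAut.conj_apply, inv_inv]

lemma doubleCoset_eq_range :
    doubleCoset g (H : Set G) K = Set.range fun p : H × K ↦ (p.1 : G) * g * p.2 := by
  ext u
  simp [mem_doubleCoset, eq_comm]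

lemma ncard_doubleCoset_le [Finite H] [Finite K] :
    (doubleCoset g (H : Set G) K).ncard ≤ Nat.card H * Nat.card K := by
  rw [doubleCoset_eq_range, ← Nat.card_prod]
  exact Finite.card_range_le _

lemma eq_and_eq_of_mul_mul_eq (hgK : Disjoint H (MulAut.conj g • K)) {a b c d : G}
    (ha : a ∈ H) (hb : b ∈ K) (hc : c ∈ H) (hd : d ∈ K) (h : a * g * b = c * g * d) :
    a = c ∧ b = d := by
  have hconj : g⁻¹ * (c⁻¹ * a) * g = d * b⁻¹ := by
    calc g⁻¹ * (c⁻¹ * a) * g = g⁻¹ * c⁻¹ * (a * g * b) * b⁻¹ := by group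
      _ = d * b⁻¹ := by rw [h]; group
  have hca : c⁻¹ * a = 1 := disjoint_conj_smul_iff.1 hgK _ (mul_mem (inv_mem hc) ha)
    (hconj ▸ mul_mem hd (inv_mem hb))
  obtain rfl : c = a := inv_mul_eq_one.1 hca
  exact ⟨rfl, mul_left_cancel h⟩

lemma ncard_doubleCoset_of_disjoint (hgK : Disjoint H (MulAut.conj g • K)) :
    (doubleCoset g (H : Set G) K).ncard = Nat.card H * Nat.card K := by
  rw [doubleCoset_eq_range, Set.ncard_range_of_injective, Nat.card_prod]
  rintro ⟨a, b⟩ ⟨c, d⟩ h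
  obtain ⟨hac, hbd⟩ := eq_and_eq_of_mul_mul_eq hgK a.2 b.2 c.2 d.2 h
  exact Prod.ext (Subtype.ext hac) (Subtype.ext hbd)

lemma mem_doubleCoset_of_card_lt [Finite G] {s : G}
    (hcard : Nat.card G < 2 * (Nat.card H * Nat.card K))
    (hs : Disjoint H (MulAut.conj s • K)) (hg : Disjoint H (MulAut.conj g • K)) :
    g ∈ doubleCoset s (H : Set G) K := by
  refine mem_doubleCoset_of_not_disjoint (Set.not_disjoint_iff_nonempty_inter.2 ?_)
  apply Set.nonempty_inter_of_lt_ncard_add_ncard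
  rwa [ncard_doubleCoset_of_disjoint hs, ncard_doubleCoset_of_disjoint hg, ← two_mul]

lemma exists_mul_mul_mem_doubleCoset [Finite G] (hcard : Nat.card G < 2 * Nat.card A ^ 2)
    (htA : Disjoint A (MulAut.conj t • A)) :
    ∃ a ∈ A, t * a * t ∈ doubleCoset t (A : Set G) A := by
  have hinter : (t • doubleCoset t (A : Set G) A ∩ doubleCoset t A A).Nonempty := by
    apply Set.nonempty_inter_of_lt_ncard_add_ncard
    rwa [Set.ncard_smul_set, ncard_doubleCoset_of_disjoint htA, ← two_mul, ← sq]
  obtain ⟨_, ⟨u, hu, rfl⟩, hmem⟩ := hinter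
  obtain ⟨a, ha, b, hb, rfl⟩ := mem_doubleCoset.1 hu
  obtain ⟨c, hc, d, hd, h : t * (a * t * b) = c * t * d⟩ := mem_doubleCoset.1 hmem
  refine ⟨a, ha, mem_doubleCoset.2 ⟨c, hc, d * b⁻¹, mul_mem hd (inv_mem hb), ?_⟩⟩
  rw [← mul_assoc, ← h]
  group

lemma card_le_of_union_doubleCoset_eq_univ [Finite A]
    (h : (A : Set G) ∪ doubleCoset t (A : Set G) A = Set.univ) :
    Finite G ∧ Nat.card G ≤ Nat.card A + Nat.card A ^ 2 := by
  have hfin : (doubleCoset t (A : Set G) A).Finite := by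
    rw [doubleCoset_eq_range]
    exact Set.finite_range _
  refine ⟨Set.finite_univ_iff.1 (h ▸ (A : Set G).toFinite.union hfin), ?_⟩
  calc Nat.card G = ((A : Set G) ∪ doubleCoset t (A : Set G) A).ncard := by
        rw [h, Set.ncard_univ]
    _ ≤ (A : Set G).ncard + (doubleCoset t (A : Set G) A).ncard := Set.ncard_union_le _ _
    _ ≤ Nat.card A + Nat.card A ^ 2 := by
      rw [sq]
      exact Nat.add_le_add_left ncard_doubleCoset_le _

lemma card_add_sq_le [Finite G] (ht : t ∉ A) (htA : Disjoint A (MulAut.conj t • A)) :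
    Nat.card A + Nat.card A ^ 2 ≤ Nat.card G := by
  have hdisj : Disjoint (A : Set G) (doubleCoset t (A : Set G) A) := by
    refine Set.disjoint_right.2 fun u hu huA ↦ ht ?_
    obtain ⟨a, ha, b, hb, rfl⟩ := mem_doubleCoset.1 hu
    exact (mul_mem_cancel_left ha).1 ((mul_mem_cancel_right hb).1 huA)
  calc Nat.card A + Nat.card A ^ 2
      = ((A : Set G) ∪ doubleCoset t (A : Set G) A).ncard := by
        rw [Set.ncard_union_eq hdisj, ncard_doubleCoset_of_disjoint htA, sq]
        rfl
    _ ≤ Nat.card G := Set.ncard_le_card _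

lemma mul_mul_mem_union_doubleCoset {a b u : G} (ha : a ∈ A) (hb : b ∈ A)
    (hu : u ∈ (A : Set G) ∪ doubleCoset t (A : Set G) A) :
    a * u * b ∈ (A : Set G) ∪ doubleCoset t (A : Set G) A := by
  rcases hu with hu | hu
  · exact Or.inl (mul_mem (mul_mem ha hu) hb)
  · obtain ⟨c, hc, d, hd, rfl⟩ := mem_doubleCoset.1 hu
    exact Or.inr (mem_doubleCoset.2 ⟨a * c, mul_mem ha hc, d * b, mul_mem hd hb, by group⟩)

lemma union_doubleCoset_eq_univ (hgen : A ⊔ Subgroup.zpowers t = ⊤) (ht : t⁻¹ = t)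
    (h : ∀ a ∈ A, t * a * t ∈ (A : Set G) ∪ doubleCoset t (A : Set G) A) :
    (A : Set G) ∪ doubleCoset t (A : Set G) A = Set.univ := by
  set S : Set G := (A : Set G) ∪ doubleCoset t (A : Set G) A
  have mul_left_mem : ∀ a ∈ A, ∀ u ∈ S, a * u ∈ S := fun a ha u hu ↦ by
    simpa only [mul_one] using mul_mul_mem_union_doubleCoset ha (one_mem A) hu
  have t_mul_mem : ∀ u ∈ S, t * u ∈ S := by
    rintro u (hu | hu)
    · exact Or.inr (mem_doubleCoset.2 ⟨1, one_mem A, u, hu, by group⟩)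
    · obtain ⟨c, hc, d, hd, rfl⟩ := mem_doubleCoset.1 hu
      simpa only [one_mul, mul_assoc] using
        mul_mul_mem_union_doubleCoset (one_mem A) hd (h c hc)
  have hstab : A ⊔ Subgroup.zpowers t ≤ MulAction.stabilizer G S := by
    refine sup_le (fun a ha ↦ MulAction.mem_stabilizer_set.2 fun u ↦ ⟨fun hu ↦ ?_, ?_⟩)
      (Subgroup.zpowers_le.2 (MulAction.mem_stabilizer_set.2 fun u ↦ ⟨fun hu ↦ ?_, ?_⟩))
    · simpa using mul_left_mem a⁻¹ (inv_mem ha) _ hu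
    · exact mul_left_mem a ha u
    · simpa only [smul_eq_mul, ← mul_assoc, mul_eq_one_iff_inv_eq.2 ht, one_mul]
        using t_mul_mem _ hu
    · exact t_mul_mem u
  refine Set.eq_univ_of_forall fun g ↦ ?_
  have hg : g ∈ MulAction.stabilizer G S := hstab (hgen ▸ Subgroup.mem_top g)
  simpa using (MulAction.mem_stabilizer_set.1 hg 1).2 (Or.inl (one_mem A))

end DoubleCosets

section CyclicSubgroups

open DoubleCoset
open scoped Pointwise

lemma eq_of_natCard_eq_of_isCyclic {C : Type*} [Group C] [IsCyclic C] [Finite C]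
    {K L : Subgroup C} (h : Nat.card K = Nat.card L) : K = L := by
  classical
  have := Fintype.ofFinite C
  have eq_torsion (M : Subgroup C) :
      (M : Set C).toFinset = ({c | c ^ Nat.card M = 1} : Finset C) := by
    refine Finset.eq_of_subset_of_card_le (fun c hc ↦ ?_) ?_
    · have hcM : c ∈ M := by simpa using hc
      simpa using orderOf_dvd_iff_pow_eq_one.1 (M.orderOf_dvd_natCard hcM)
    · rw [Set.toFinset_card, ← Nat.card_eq_fintype_card]
      exact IsCyclic.card_pow_eq_one_le Nat.card_pos
  exact SetLike.coe_injective (Set.toFinset_inj.1 (by rw [eq_torsion K, eq_torsion L, h]))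

variable {A K L : Subgroup G} [Finite A] {g t z a : G}

lemma eq_of_le_of_natCard_eq [IsCyclic A] (hK : K ≤ A) (hL : L ≤ A) (h : Nat.card K = Nat.card L) :
    K = L := by
  have hcard : Nat.card (K.subgroupOf A) = Nat.card (L.subgroupOf A) := by
    rwa [Nat.card_congr (Subgroup.subgroupOfEquivOfLe hK).toEquiv,
      Nat.card_congr (Subgroup.subgroupOfEquivOfLe hL).toEquiv]
  simpa [hK, hL] using Subgroup.subgroupOf_inj.1 (eq_of_natCard_eq_of_isCyclic hcard)

lemma mem_normalizer_of_conj_smul_le [IsCyclic A] (hK : K ≤ A) (hg : MulAut.conj g • K ≤ A) :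
    g ∈ Subgroup.normalizer (K : Set G) :=
  Subgroup.mem_normalizer_iff_map_conj_eq.2 <| eq_of_le_of_natCard_eq hg hK <|
    Subgroup.card_map_of_injective (MulAut.conj g).injective

lemma disjoint_conj_conj_smul (htA : Disjoint A (MulAut.conj t • A))
    (hz : Subgroup.zpowers z = A) (ha : a ∈ A)
    (hta : t * a * t⁻¹ ∈ doubleCoset t (A : Set G) A) :
    Disjoint A (MulAut.conj (t * z * t⁻¹) • A) := by
  have : IsCyclic A := hz ▸ inferInstance
  let K := A ⊓ MulAut.conj (t * z * t⁻¹) • A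
  let N := Subgroup.normalizer (K : Set G)
  have hKA : K ≤ A := inf_le_left
  have hAN : A ≤ N := fun c hc ↦
    mem_normalizer_of_conj_smul_le hKA (Subgroup.conj_smul_le_of_le hKA ⟨c, hc⟩)
  have hzN : t * z * t⁻¹ ∈ N := by
    rw [← inv_mem_iff]
    apply mem_normalizer_of_conj_smul_le hKA
    rw [map_inv, ← Subgroup.subset_pointwise_smul_iff]
    exact inf_le_right
  have htaN : t * a * t⁻¹ ∈ N := by
    obtain ⟨k, rfl⟩ := Subgroup.mem_zpowers_iff.1 (hz ▸ ha)
    rw [← conj_zpow]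
    exact zpow_mem hzN k
  have htN : t ∈ N := by
    obtain ⟨c, hc, d, hd, h⟩ := mem_doubleCoset.1 hta
    rw [h] at htaN
    exact (mul_mem_cancel_left (hAN hc)).1 ((mul_mem_cancel_right (hAN hd)).1 htaN)
  have hKt : K ≤ MulAut.conj t • A := calc
    K = MulAut.conj t • K := (Subgroup.mem_normalizer_iff_map_conj_eq.1 htN).symm
    _ ≤ MulAut.conj t • A := Subgroup.pointwise_smul_le_pointwise_smul_iff.2 hKA
  exact disjoint_iff_inf_le.2 (htA hKA hKt)

end CyclicSubgroups

section Involution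

open DoubleCoset
open scoped Pointwise

variable {A : Subgroup G} {t z a b : G}

lemma inv_eq_self_of_sq_eq_one (ht : t ^ 2 = 1) : t⁻¹ = t :=
  inv_eq_of_mul_eq_one_left (by rw [← sq, ht])

lemma mul_inv_mul_eq (ht : t⁻¹ = t) (h : t * z * t = a * t * b) :
    t * z⁻¹ * t = b⁻¹ * t * a⁻¹ := by
  simpa only [mul_inv_rev, ht, mul_assoc] using congrArg (·⁻¹) h

/-- `u ↦ τ u⁻¹` reverses products and fixes `t` and every element of `A`, so it carries
`a * t * b` to `b * t * a`. -/
lemma left_eq_right_of_mul_mul_eq (ht : t⁻¹ = t) (htA : Disjoint A (MulAut.conj t • A))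
    {τ : G →* G} (hτA : ∀ a ∈ A, τ a = a⁻¹) (hτt : τ t = t)
    (hz : z ∈ A) (ha : a ∈ A) (hb : b ∈ A) (h : t * z * t = a * t * b) : a = b := by
  have hrev : a * t * b = b * t * a := calc
    a * t * b = t * z * t := h.symm
    _ = τ (t * z * t)⁻¹ := by simp [hτA z hz, hτt, ht, mul_assoc]
    _ = b * t * a := by simp [h, hτA a ha, hτA b hb, hτt, ht, mul_assoc]
  exact (eq_and_eq_of_mul_mul_eq htA ha hb hb ha hrev).1

lemma mul_mul_eq_inv_mul_mul_inv (ht : t⁻¹ = t) (htA : Disjoint A (MulAut.conj t • A))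
    {τ : G →* G} (hτA : ∀ a ∈ A, τ a = a⁻¹) (hτt : τ t = t)
    (hz : z ∈ A) (h : t * z * t ∈ doubleCoset t (A : Set G) A) :
    t * z * t = z⁻¹ * t * z⁻¹ := by
  obtain ⟨a, ha, b, hb, hab⟩ := mem_doubleCoset.1 h
  obtain rfl := left_eq_right_of_mul_mul_eq ht htA hτA hτt hz ha hb hab
  have hswap : t * a * t = z * t * a⁻¹ := by
    calc t * a * t = t⁻¹ * (t * z * t) * a⁻¹ := by rw [hab, ht]; group
      _ = z * t * a⁻¹ := by group
  obtain rfl := left_eq_right_of_mul_mul_eq ht htA hτA hτt ha hz (inv_mem ha) hswap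
  rwa [inv_inv]

lemma mul_generator_mul_eq [Finite G] (hcard : Nat.card G < 2 * Nat.card A ^ 2)
    (ht : t⁻¹ = t) (htA : Disjoint A (MulAut.conj t • A))
    {τ : G →* G} (hτA : ∀ a ∈ A, τ a = a⁻¹) (hτt : τ t = t) (hz : Subgroup.zpowers z = A) :
    t * z * t = z⁻¹ * t * z⁻¹ := by
  refine mul_mul_eq_inv_mul_mul_inv ht htA hτA hτt (hz ▸ Subgroup.mem_zpowers z) ?_
  obtain ⟨a, ha, hta⟩ := exists_mul_mul_mem_doubleCoset hcard htA
  have hdisj := disjoint_conj_conj_smul htA hz ha (by rwa [ht])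
  rw [ht] at hdisj
  exact mem_doubleCoset_of_card_lt (by rwa [← sq]) htA hdisj

lemma pow_three_eq_one_of_mul_mul_eq {y : G} (ht : t⁻¹ = t)
    (hy : t * y * t = y⁻¹ * t * y⁻¹)
    (hy2 : t * y ^ 2 * t = (y ^ 2)⁻¹ * t * (y ^ 2)⁻¹) : y ^ 3 = 1 := by
  have hyty : t * y ^ 2 * t = y * t * y := calc
    t * y ^ 2 * t = t * y * t * (t⁻¹ * y * t) := by rw [sq]; group
    _ = y⁻¹ * t * y⁻¹ * (y⁻¹ * t * y⁻¹) := by rw [ht, hy]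
    _ = y⁻¹ * (t * (y ^ 2)⁻¹ * t) * y⁻¹ := by group
    _ = y⁻¹ * ((y ^ 2)⁻¹⁻¹ * t * (y ^ 2)⁻¹⁻¹) * y⁻¹ := by rw [mul_inv_mul_eq ht hy2]
    _ = y * t * y := by group
  have hy_inv : t * (y ^ 2)⁻¹ * t = t * y * t := (mul_inv_mul_eq ht hyty).trans hy.symm
  have hinv : (y ^ 2)⁻¹ = y := mul_left_cancel (mul_right_cancel hy_inv)
  rw [pow_succ, ← inv_eq_iff_mul_eq_one, hinv]

end Involution

section Tetrahedron

open DoubleCoset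

variable {x y : G}

lemma pow_three_eq_one_iff_mul_mul_eq (hxy : (x * y) ^ 2 = 1) :
    x ^ 3 = 1 ↔ x * y * y * (x * y) = y⁻¹ * (x * y) * y⁻¹ := by
  have hyxy : y * (x * y) = x⁻¹ := by
    rw [eq_inv_iff_mul_eq_one, mul_eq_one_comm, ← mul_assoc, ← sq, hxy]
  have hconj : y * (x * y * x⁻¹) = x⁻¹ * x⁻¹ := by rw [← mul_assoc, hyxy]
  calc x ^ 3 = 1 ↔ x⁻¹ = x * x := by
        rw [inv_eq_iff_mul_eq_one, ← mul_assoc, ← sq, ← pow_succ]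
    _ ↔ x⁻¹ * x⁻¹ = x := mul_inv_eq_iff_eq_mul.symm
    _ ↔ x * y * x⁻¹ = y⁻¹ * x := by rw [← hconj, eq_inv_mul_iff_mul_eq]
    _ ↔ x * y * y * (x * y) = y⁻¹ * (x * y) * y⁻¹ := by
      rw [mul_assoc _ y (x * y), hyxy, mul_assoc y⁻¹, mul_inv_cancel_right]

lemma zpowers_sup_zpowers_mul_eq_top (hgen : Subgroup.closure {x, y} = ⊤) :
    Subgroup.zpowers y ⊔ Subgroup.zpowers (x * y) = ⊤ := by
  have hy : y ∈ Subgroup.zpowers y ⊔ Subgroup.zpowers (x * y) :=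
    Subgroup.mem_sup_left (Subgroup.mem_zpowers y)
  have hxy : x * y ∈ Subgroup.zpowers y ⊔ Subgroup.zpowers (x * y) :=
    Subgroup.mem_sup_right (Subgroup.mem_zpowers (x * y))
  rw [eq_top_iff, ← hgen, Subgroup.closure_le]
  rintro u (rfl | rfl)
  · exact (mul_mem_cancel_right hy).1 hxy
  · exact hy

lemma eq_one_or_eq_or_eq_inv_of_mem_zpowers (hy : y ^ 3 = 1) {a : G}
    (ha : a ∈ Subgroup.zpowers y) : a = 1 ∨ a = y ∨ a = y⁻¹ := by
  obtain ⟨k, rfl⟩ := Subgroup.mem_zpowers_iff.1 ha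
  have hinv : y ^ 2 = y⁻¹ := eq_inv_of_mul_eq_one_left (by rw [← pow_succ, hy])
  have hmod : y ^ k = y ^ (k % 3) := zpow_eq_zpow_emod' k hy
  have hcases : k % 3 = 0 ∨ k % 3 = 1 ∨ k % 3 = 2 := by omega
  rcases hcases with h | h | h
  · simp [hmod, h]
  · simp [hmod, h]
  · exact Or.inr (Or.inr (by rw [hmod, h]; exact_mod_cast hinv))

lemma finite_and_card_le_twelve_of_relations (hgen : Subgroup.closure {x, y} = ⊤)
    (hx : x ^ 3 = 1) (hy : y ^ 3 = 1) (hxy : (x * y) ^ 2 = 1) :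
    Finite G ∧ Nat.card G ≤ 12 := by
  have ht : (x * y)⁻¹ = x * y := inv_eq_self_of_sq_eq_one hxy
  have hrel := (pow_three_eq_one_iff_mul_mul_eq hxy).1 hx
  have hrel' : x * y * y⁻¹ * (x * y) = y * (x * y) * y := by
    simpa only [inv_inv] using mul_inv_mul_eq ht hrel
  have hyA := Subgroup.mem_zpowers y
  have hfin : Finite (Subgroup.zpowers y) :=
    (isOfFinOrder_iff_pow_eq_one.2 ⟨3, by norm_num, hy⟩).finite_zpowers
  have huniv := union_doubleCoset_eq_univ (zpowers_sup_zpowers_mul_eq_top hgen) ht fun a ha ↦ by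
    rcases eq_one_or_eq_or_eq_inv_of_mem_zpowers hy ha with rfl | rfl | rfl
    · exact Or.inl (by simp [← sq, hxy])
    · exact Or.inr (mem_doubleCoset.2 ⟨_, inv_mem hyA, _, inv_mem hyA, hrel⟩)
    · exact Or.inr (mem_doubleCoset.2 ⟨_, hyA, _, hyA, hrel'⟩)
  obtain ⟨hG, hcard⟩ := card_le_of_union_doubleCoset_eq_univ huniv
  have hA : Nat.card (Subgroup.zpowers y) ≤ 3 := by
    rw [Nat.card_zpowers]
    exact orderOf_le_of_pow_eq_one (by norm_num) hy
  exact ⟨hG, hcard.trans (Nat.add_le_add hA (Nat.pow_le_pow_left hA 2))⟩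

lemma presentedGroup_tetRels_relations :
    Subgroup.closure {PresentedGroup.of (rels := tetRels) 0, PresentedGroup.of 1} = ⊤ ∧
      PresentedGroup.of (rels := tetRels) 0 ^ 3 = 1 ∧
      PresentedGroup.of (rels := tetRels) 1 ^ 3 = 1 ∧
      (PresentedGroup.of (rels := tetRels) 0 * PresentedGroup.of 1) ^ 2 = 1 := by
  refine ⟨?_, PresentedGroup.one_of_mem (x := FreeGroup.of 0 ^ 3) (by simp [tetRels]),
    PresentedGroup.one_of_mem (x := FreeGroup.of 1 ^ 3) (by simp [tetRels]),
    PresentedGroup.one_of_mem (x := (FreeGroup.of 0 * FreeGroup.of 1) ^ 2) (by simp [tetRels])⟩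
  rw [← PresentedGroup.closure_range_of]
  congr 1
  ext u
  simp [Fin.exists_fin_two, eq_comm]

lemma isTet_of_twelve_le_card (hgen : Subgroup.closure {x, y} = ⊤)
    (hx : x ^ 3 = 1) (hy : y ^ 3 = 1) (hxy : (x * y) ^ 2 = 1) (hcard : 12 ≤ Nat.card G) :
    IsTet G x y := by
  have hrels : ∀ r ∈ tetRels, FreeGroup.lift ![x, y] r = 1 := by
    rintro r (rfl | rfl | rfl) <;> simpa
  let φ := PresentedGroup.toGroup hrels
  have hφx : φ (PresentedGroup.of 0) = x := PresentedGroup.toGroup.of hrels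
  have hφy : φ (PresentedGroup.of 1) = y := PresentedGroup.toGroup.of hrels
  have hφ : Function.Surjective φ := by
    rw [← MonoidHom.range_eq_top, eq_top_iff, ← hgen, Subgroup.closure_le]
    rintro u (rfl | rfl)
    exacts [⟨_, hφx⟩, ⟨_, hφy⟩]
  obtain ⟨hgenP, hX, hY, hXY⟩ := presentedGroup_tetRels_relations
  obtain ⟨_, hcardP⟩ := finite_and_card_le_twelve_of_relations hgenP hX hY hXY
  have hbij := hφ.bijective_of_nat_card_le (hcardP.trans hcard)
  exact ⟨MulEquiv.ofBijective φ hbij, hφx, hφy⟩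

end Tetrahedron

section RegularMaps

open scoped Pointwise

variable {x y : G}

lemma IsSimple.mul_notMem_zpowers (h : IsSimple x y) : x * y ∉ Subgroup.zpowers y := fun hxy ↦
  h.1 1 (QuotientGroup.eq.2 (by simpa using hxy))

lemma IsSimple.disjoint_conj_smul (h : IsSimple x y) (hxy : (x * y) ^ 2 = 1) :
    Disjoint (Subgroup.zpowers y) (MulAut.conj (x * y) • Subgroup.zpowers y) := by
  refine disjoint_conj_smul_iff.2 fun a ha hconj ↦ ?_
  have hleft : (QuotientGroup.mk 1 : Vertex y) = QuotientGroup.mk a :=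
    QuotientGroup.eq.2 (by simpa using ha)
  have hright : (QuotientGroup.mk (1 * x * y) : Vertex y) = QuotientGroup.mk (a * x * y) :=
    QuotientGroup.eq.2 (by simpa only [one_mul, mul_assoc] using hconj)
  have hedge := h.2 1 a (by rw [hleft, hright])
  have hmem : a ∈ Subgroup.zpowers (x * y) := by simpa using QuotientGroup.eq.1 hedge
  obtain ⟨k, rfl⟩ := Subgroup.mem_zpowers_iff.1 hmem
  have hmod : (x * y) ^ k = (x * y) ^ (k % 2) := zpow_eq_zpow_emod' k hxy
  rcases Int.emod_two_eq_zero_or_one k with hk | hk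
  · rw [hmod, hk, zpow_zero]
  · rw [hmod, hk, zpow_one] at ha
    exact absurd ha h.mul_notMem_zpowers

lemma IsReflexive.exists_inverting (h : IsReflexive x y) (hxy : (x * y) ^ 2 = 1) :
    ∃ τ : G ≃* G, (∀ a ∈ Subgroup.zpowers y, τ a = a⁻¹) ∧ τ (x * y) = x * y := by
  obtain ⟨σ, hσx, hσy⟩ := h
  let τ := σ.trans (MulAut.conj y⁻¹)
  have hτy : τ y = y⁻¹ := by simp [τ, hσy]
  refine ⟨τ, fun a ha ↦ ?_, ?_⟩
  · obtain ⟨k, rfl⟩ := Subgroup.mem_zpowers_iff.1 ha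
    rw [map_zpow, hτy, inv_zpow]
  · calc τ (x * y) = (x * y)⁻¹ := by simp [τ, hσx, hσy, mul_assoc]
      _ = x * y := inv_eq_self_of_sq_eq_one hxy

lemma pow_three_eq_one_of_odd_orderOf [Finite G] (hxy : (x * y) ^ 2 = 1)
    (hrefl : IsReflexive x y) (hsimple : IsSimple x y)
    (hden : Nat.card G < 2 * orderOf y ^ 2) (hodd : Odd (orderOf y)) :
    x ^ 3 = 1 ∧ y ^ 3 = 1 := by
  have ht : (x * y)⁻¹ = x * y := inv_eq_self_of_sq_eq_one hxy
  obtain ⟨τ, hτy, hτt⟩ := hrefl.exists_inverting hxy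
  have hrel {z : G} (hz : Subgroup.zpowers z = Subgroup.zpowers y) :
      x * y * z * (x * y) = z⁻¹ * (x * y) * z⁻¹ :=
    mul_generator_mul_eq (τ := τ) (by rwa [Nat.card_zpowers]) ht
      (hsimple.disjoint_conj_smul hxy)
      hτy hτt hz
  have hy2 : Subgroup.zpowers (y ^ 2) = Subgroup.zpowers y :=
    le_antisymm (Subgroup.zpowers_le.2 (Subgroup.npow_mem_zpowers y 2))
      (Subgroup.zpowers_le.2 (mem_zpowers_pow_iff.2 hodd.coprime_two_left))
  exact ⟨(pow_three_eq_one_iff_mul_mul_eq hxy).2 (hrel rfl),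
    pow_three_eq_one_of_mul_mul_eq ht (hrel rfl) (hrel hy2)⟩

end RegularMaps

/-- A simple reflexive regular map of density exceeding 1/2 with `q` odd is the
tetrahedron; in particular `q = 3`, `|G| = 12` and the density is 3/4. -/
theorem odd_q_implies_tet
    (G : Type*) [Group G] [Finite G] (x y : G)
    (hgen : Subgroup.closure {x, y} = ⊤) (hxy : (x * y) ^ 2 = 1)
    (hrefl : IsReflexive x y) (hsimple : IsSimple x y)
    (hden : 2 * orderOf y ^ 2 > Nat.card G) (hodd : Odd (orderOf y)) :
    IsTet G x y ∧ orderOf y = 3 ∧ Nat.card G = 12 ∧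
      4 * orderOf y ^ 2 = 3 * Nat.card G := by
  obtain ⟨hx3, hy3⟩ := pow_three_eq_one_of_odd_orderOf hxy hrefl hsimple hden hodd
  have hlower : orderOf y + orderOf y ^ 2 ≤ Nat.card G := by
    simpa only [Nat.card_zpowers] using
      card_add_sq_le hsimple.mul_notMem_zpowers (hsimple.disjoint_conj_smul hxy)
  have hy1 : y ≠ 1 := by
    rintro rfl
    rw [orderOf_one] at hlower hden
    omega
  have hq : orderOf y = 3 := orderOf_eq_prime hy3 hy1
  have hupper : Nat.card G ≤ 12 := (finite_and_card_le_twelve_of_relations hgen hx3 hy3 hxy).2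
  have hcard : Nat.card G = 12 := by rw [hq] at hlower; omega
  exact ⟨isTet_of_twelve_le_card hgen hx3 hy3 hxy hcard.ge, hq, hcard, by rw [hq, hcard]; rfl⟩

end RegularMap
end

section
/- Let (G,x,y) encode a reflexive regular map that is simple, satisfies 2q² > |G| (density exceeding 1/2), has p = 3, and is not the tetrahedral map tet. Then for all vertices v and w of the map, S_v^T commutes with S_w^T, and S_v^T commutes with S_w^4. -/
namespace RegularMap

variable {G : Type*} [Group G]

/-!
Write `J` and `T` for the primitive and the even period, and let `D` be the stabiliser of the
diagonal class of the base vertex. The rotations `u ∈ ⟨y⟩` fixing that class pointwise, `y^J` and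
`y^T` among them, form a cyclic group normalised by `D`, so each element of `D` acts on this group
by some power map `u ↦ u^k`. Since `D` has at most three cosets `D`, `xD`, `x⁻¹D`, and `y`
interchanges the last two, it suffices to take for `w` the base vertex and for `v` its neighbour
`x⟨y⟩`.

As `T` is even, the `T`-th powers of the rotations about two adjacent vertices each stabilise the
diagonal class of the other one. Their commutator is therefore a rotation about both vertices, and
simplicity makes it trivial. For the second claim, `y^T` is normalised by `t = x⁻¹ y² x`, and a
reflection inverting both `y` and `t` shows that `t` and `t⁻¹` conjugate it in the same way; hence
`t² = x⁻¹ y⁴ x` centralises it.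
-/

section GroupLemmas

theorem mul_mul_self_eq_inv_left {a b : G} (h : (a * b) ^ 2 = 1) : b * a * b = a⁻¹ :=
  eq_inv_of_mul_eq_one_right (by rw [← h, sq]; group)

theorem mul_mul_self_eq_inv_right {a b : G} (h : (a * b) ^ 2 = 1) : a * b * a = b⁻¹ :=
  eq_inv_of_mul_eq_one_left (by rw [← h, sq]; group)

theorem swap_mul_eq_inv_mul_inv {a b : G} (h : (a * b) ^ 2 = 1) : b * a = a⁻¹ * b⁻¹ := by
  rw [← mul_mul_self_eq_inv_left h, mul_inv_cancel_right]

theorem mul_self_eq_inv {a : G} (h : a ^ 3 = 1) : a * a = a⁻¹ :=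
  eq_inv_of_mul_eq_one_left (by rw [← pow_three', h])

theorem commute_conj_left_iff {g u v : G} :
    Commute (g * u * g⁻¹) v ↔ Commute u (g⁻¹ * v * g) := by
  have hv : g * (g⁻¹ * v * g) * g⁻¹ = v := by group
  rw [← Commute.conj_iff g (b := g⁻¹ * v * g), hv]

theorem exists_conj_eq_zpow {N : Subgroup G} [IsCyclic N] {g : G}
    (hg : ∀ u ∈ N, g * u * g⁻¹ ∈ N) {u : G} (hu : u ∈ N) : ∃ k : ℤ, g * u * g⁻¹ = u ^ k := by
  obtain ⟨k, hk⟩ := MonoidHom.map_cyclic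
    (((MulAut.conj g).toMonoidHom.comp N.subtype).codRestrict N fun v ↦ hg v v.2)
  exact ⟨k, congrArg Subtype.val (hk ⟨u, hu⟩)⟩

theorem map_eq_inv_of_mem_zpowers {a u : G} {τ : G →* G} (ha : τ a = a⁻¹)
    (hu : u ∈ Subgroup.zpowers a) : τ u = u⁻¹ := by
  obtain ⟨k, rfl⟩ := hu
  simp only [map_zpow, ha, inv_zpow]

theorem commute_sq_of_map_eq_inv {t u : G} {τ : G →* G} (ht : τ t = t⁻¹) (hu : τ u = u⁻¹)
    (htu : τ (t * u * t⁻¹) = (t * u * t⁻¹)⁻¹) : Commute u (t ^ 2) := by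
  have hconj : t⁻¹ * u * t = t * u * t⁻¹ := by
    rw [← inv_inj, ← htu, map_mul, map_mul, map_inv, ht, hu]
    group
  calc u * t ^ 2 = t * (t⁻¹ * u * t) * t := by rw [sq]; group
    _ = t ^ 2 * u := by rw [hconj, sq]; group

end GroupLemmas

section Diagonal

open scoped Pointwise

variable {x y : G}

/-- The stabiliser of the diagonal alignment class of the base vertex `⟨y⟩`, given by generators:
the rotation about the base vertex and the square of the rotation about its neighbour `x⟨y⟩`. -/
def diagSubgroup (x y : G) : Subgroup G := Subgroup.closure {y, x * y ^ 2 * x⁻¹}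

theorem right_mem_diagSubgroup : y ∈ diagSubgroup x y := Subgroup.subset_closure (by simp)

theorem conj_pow_mem_diagSubgroup {n : ℕ} (hn : Even n) :
    x * y ^ n * x⁻¹ ∈ diagSubgroup x y := by
  obtain ⟨m, rfl⟩ := hn.exists_two_nsmul
  rw [smul_eq_mul, pow_mul, ← conj_pow]
  exact pow_mem (Subgroup.subset_closure (by simp)) m

-- The rotation about the base vertex carries its neighbour `x⟨y⟩` to its neighbour `x⁻¹⟨y⟩`.
theorem inv_conj_eq_conj_conj (hxy : (x * y) ^ 2 = 1) {u : G} (hu : u ∈ Subgroup.zpowers y) :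
    x⁻¹ * u * x = y * (x * u * x⁻¹) * y⁻¹ := by
  obtain ⟨k, rfl⟩ := hu
  calc x⁻¹ * y ^ k * x = (x⁻¹ * y⁻¹) * y ^ k * (x⁻¹ * y⁻¹)⁻¹ := by group
    _ = y * (x * y ^ k * x⁻¹) * y⁻¹ := by rw [← swap_mul_eq_inv_mul_inv hxy]; group

theorem inv_conj_pow_mem_diagSubgroup (hxy : (x * y) ^ 2 = 1) {n : ℕ} (hn : Even n) :
    x⁻¹ * y ^ n * x ∈ diagSubgroup x y := by
  rw [inv_conj_eq_conj_conj hxy (Subgroup.npow_mem_zpowers y n)]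
  exact mul_mem (mul_mem right_mem_diagSubgroup (conj_pow_mem_diagSubgroup hn))
    (inv_mem right_mem_diagSubgroup)

-- `x` permutes the three cosets cyclically; `y` fixes the first and swaps the other two.
theorem mk_diagSubgroup_mem (hgen : Subgroup.closure {x, y} = ⊤)
    (hxy : (x * y) ^ 2 = 1) (hx : x ^ 3 = 1) (g : G) :
    (g : G ⧸ diagSubgroup x y) ∈ ({↑(1 : G), ↑x, ↑x⁻¹} : Set (G ⧸ diagSubgroup x y)) := by
  set S : Set (G ⧸ diagSubgroup x y) := {↑(1 : G), ↑x, ↑x⁻¹} with hS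
  have hyx_inv : y * x⁻¹ = x * (x⁻¹ * y ^ 2 * x * y) := by
    calc y * x⁻¹ = y * (y * x * y) := by rw [mul_mul_self_eq_inv_left hxy]
      _ = x * (x⁻¹ * y ^ 2 * x * y) := by rw [sq]; group
  have hxS : x ∈ MulAction.stabilizer G S := by
    rw [MulAction.mem_stabilizer_set' S.toFinite]
    rintro _ (rfl | rfl | rfl) <;> simp [hS, mul_self_eq_inv hx]
  have hyS : y ∈ MulAction.stabilizer G S := by
    rw [MulAction.mem_stabilizer_set' S.toFinite]
    rintro _ (rfl | rfl | rfl) <;> rw [MulAction.Quotient.smul_coe, smul_eq_mul]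
    · left
      exact QuotientGroup.eq.2 (by simpa using right_mem_diagSubgroup)
    · right; right
      rw [swap_mul_eq_inv_mul_inv hxy,
        QuotientGroup.mk_mul_of_mem _ (inv_mem right_mem_diagSubgroup)]
      rfl
    · right; left
      rw [hyx_inv, QuotientGroup.mk_mul_of_mem _
        (mul_mem (inv_conj_pow_mem_diagSubgroup hxy even_two) right_mem_diagSubgroup)]
  have hgS : g ∈ MulAction.stabilizer G S :=
    (Subgroup.closure_le _).2 (Set.pair_subset hxS hyS) (hgen ▸ Subgroup.mem_top g)
  have h1S : ((1 : G) : G ⧸ diagSubgroup x y) ∈ S := Or.inl rfl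
  simpa [MulAction.Quotient.smul_coe] using (MulAction.mem_stabilizer_set.1 hgS _).2 h1S

theorem exists_eq_mul_diagSubgroup (hgen : Subgroup.closure {x, y} = ⊤)
    (hxy : (x * y) ^ 2 = 1) (hx : x ^ 3 = 1) (g : G) :
    ∃ a ∈ ({1, x, x⁻¹} : Set G), ∃ d ∈ diagSubgroup x y, g = a * d := by
  have mul_of_mk_eq {a : G} (h : (g : G ⧸ diagSubgroup x y) = a) :
      ∃ d ∈ diagSubgroup x y, g = a * d :=
    ⟨a⁻¹ * g, QuotientGroup.eq.1 h.symm, (mul_inv_cancel_left a g).symm⟩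
  rcases mk_diagSubgroup_mem hgen hxy hx g with h | h | h
  · exact ⟨1, by simp, mul_of_mk_eq h⟩
  · exact ⟨x, by simp, mul_of_mk_eq h⟩
  · exact ⟨x⁻¹, by simp, mul_of_mk_eq h⟩

/-- The rotations about the base vertex that fix its diagonal alignment class pointwise: the
normal core of `⟨y⟩` in `diagSubgroup x y`. -/
def diagKernel (x y : G) : Subgroup G :=
  ⨅ h ∈ diagSubgroup x y, (Subgroup.zpowers y).comap (MulAut.conj h).toMonoidHom

theorem mem_diagKernel {u : G} :
    u ∈ diagKernel x y ↔ ∀ h ∈ diagSubgroup x y, h * u * h⁻¹ ∈ Subgroup.zpowers y := by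
  simp [diagKernel, Subgroup.mem_iInf]

theorem diagKernel_le_zpowers : diagKernel x y ≤ Subgroup.zpowers y := fun u hu ↦ by
  simpa using mem_diagKernel.1 hu 1 (one_mem _)

theorem conj_mem_diagKernel {u h : G} (hu : u ∈ diagKernel x y) (hh : h ∈ diagSubgroup x y) :
    h * u * h⁻¹ ∈ diagKernel x y := by
  refine mem_diagKernel.2 fun k hk ↦ ?_
  have hkh : k * (h * u * h⁻¹) * k⁻¹ = k * h * u * (k * h)⁻¹ := by group
  rw [hkh]
  exact mem_diagKernel.1 hu _ (mul_mem hk hh)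

theorem exists_conj_eq_zpow_of_mem_diagKernel {u h : G} (hu : u ∈ diagKernel x y)
    (hh : h ∈ diagSubgroup x y) : ∃ k : ℤ, h * u * h⁻¹ = u ^ k :=
  have : IsCyclic (diagKernel x y) := Subgroup.isCyclic_of_le diagKernel_le_zpowers
  exists_conj_eq_zpow (fun _ hv ↦ conj_mem_diagKernel hv hh) hu

end Diagonal

section Period

variable {x y : G}

theorem rot_mk (g : G) : rot y (g : Vertex y) = g * y * g⁻¹ := rfl

theorem mk_mul_self (g : G) : ((g * y : G) : Vertex y) = g :=
  QuotientGroup.mk_mul_of_mem g (Subgroup.mem_zpowers y)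

theorem diagNeighbor_mk_mul_conj (hsimple : IsSimple x y) (g : G) :
    DiagNeighbor x y (g : Vertex y) ((g * (x * y ^ 2 * x⁻¹) : G) : Vertex y) := by
  refine ⟨(g * x : G), ⟨?_, g, ?_⟩, ?_⟩
  · simpa only [mk_mul_self] using hsimple.1 g
  · rw [mk_mul_self]
  · rw [rot_mk, conj_pow, MulAction.Quotient.smul_coe, smul_eq_mul]
    congr 1
    group

theorem inv_conj_sq_eq (hxy : (x * y) ^ 2 = 1) (hx : x ^ 3 = 1) :
    (x * y ^ 2 * x⁻¹)⁻¹ = y * (x * y ^ 2 * x⁻¹) * y := by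
  calc (x * y ^ 2 * x⁻¹)⁻¹ = x * y⁻¹ * y⁻¹ * x⁻¹ := by rw [sq]; group
    _ = x * (x * y * x) * (x * y * x) * x⁻¹ := by rw [mul_mul_self_eq_inv_right hxy]
    _ = (x * x) * y * (x * x) * y := by group
    _ = x⁻¹ * y * x⁻¹ * y := by rw [mul_self_eq_inv hx]
    _ = (y * x * y) * y * x⁻¹ * y := by rw [mul_mul_self_eq_inv_left hxy]
    _ = y * (x * y ^ 2 * x⁻¹) * y := by rw [sq]; group

theorem aligned_mk_of_mem_diagSubgroup (hsimple : IsSimple x y) (hxy : (x * y) ^ 2 = 1)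
    (hx : x ^ 3 = 1) {h : G} (hh : h ∈ diagSubgroup x y) :
    Aligned x y ((1 : G) : Vertex y) (h : Vertex y) := by
  induction hh using Subgroup.closure_induction_right with
  | one => exact Relation.ReflTransGen.refl
  | mul_right b _ a ha ih =>
    rcases ha with rfl | rfl
    · rwa [mk_mul_self]
    · exact ih.tail (diagNeighbor_mk_mul_conj hsimple b)
  | mul_inv_cancel b _ a ha ih =>
    rcases ha with rfl | rfl
    · rwa [QuotientGroup.mk_mul_of_mem b (inv_mem (Subgroup.mem_zpowers a))]
    · rw [inv_conj_sq_eq hxy hx, ← mul_assoc, mk_mul_self, ← mul_assoc]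
      rw [← mk_mul_self b] at ih
      exact ih.tail (diagNeighbor_mk_mul_conj hsimple (b * y))

theorem primPeriod_pos (hy : IsOfFinOrder y) : 0 < primPeriod x y := by
  refine (Nat.sInf_mem (s := {j | 1 ≤ j ∧ ∀ v v' : Vertex y, Aligned x y v v' →
    rot y v ^ j • v' = v'}) ⟨orderOf y, hy.orderOf_pos, fun v v' _ ↦ ?_⟩).1
  induction v using QuotientGroup.induction_on with
  | H g => rw [rot_mk, conj_pow, pow_orderOf_eq_one, mul_one, mul_inv_cancel, one_smul]

theorem rot_pow_primPeriod_smul (hJ : 0 < primPeriod x y) {v v' : Vertex y}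
    (h : Aligned x y v v') : rot y v ^ primPeriod x y • v' = v' :=
  (Nat.sInf_mem (Nat.nonempty_of_pos_sInf hJ)).2 v v' h

theorem pow_primPeriod_mem_diagKernel (hsimple : IsSimple x y) (hxy : (x * y) ^ 2 = 1)
    (hx : x ^ 3 = 1) (hJ : 0 < primPeriod x y) : y ^ primPeriod x y ∈ diagKernel x y := by
  refine mem_diagKernel.2 fun h hh ↦ ?_
  have hfix := rot_pow_primPeriod_smul hJ
    (aligned_mk_of_mem_diagSubgroup hsimple hxy hx (inv_mem hh))
  rw [rot_mk, one_mul, inv_one, mul_one, MulAction.Quotient.smul_coe, eq_comm,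
    QuotientGroup.eq] at hfix
  simpa [mul_assoc] using hfix

theorem pow_evenPeriod_mem_diagKernel (hsimple : IsSimple x y) (hxy : (x * y) ^ 2 = 1)
    (hx : x ^ 3 = 1) (hJ : 0 < primPeriod x y) : y ^ evenPeriod x y ∈ diagKernel x y := by
  obtain ⟨m, hm⟩ : primPeriod x y ∣ evenPeriod x y := Nat.dvd_lcm_left _ _
  rw [hm, pow_mul]
  exact pow_mem (pow_primPeriod_mem_diagKernel hsimple hxy hx hJ) m

theorem even_evenPeriod : Even (evenPeriod x y) := even_iff_two_dvd.2 (Nat.dvd_lcm_right _ _)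

end Period

section Commutation

open scoped commutatorElement

variable {x y : G}

-- Such a `u` fixes both endpoints of the edge `⟨x * y⟩`; it therefore fixes that edge, and cannot
-- reverse it because the endpoints differ.
theorem eq_one_of_mem_zpowers_of_inv_conj_mem_zpowers (hsimple : IsSimple x y)
    (hxy : (x * y) ^ 2 = 1) {u : G} (hu : u ∈ Subgroup.zpowers y)
    (hxu : x⁻¹ * u * x ∈ Subgroup.zpowers y) : u = 1 := by
  have hfix_base : (u : Vertex y) = (1 : G) := by
    rw [eq_comm, QuotientGroup.eq]; simpa using hu
  have hfix_nbr : ((u * x : G) : Vertex y) = x := by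
    rw [eq_comm, QuotientGroup.eq]; simpa [mul_assoc] using hxu
  have hedge : (u : G ⧸ Subgroup.zpowers (x * y)) = (1 : G) :=
    hsimple.2 u 1 (by rw [mk_mul_self, mk_mul_self, one_mul, hfix_base, hfix_nbr])
  obtain ⟨k, hk⟩ : ∃ k : ℤ, (x * y) ^ k = u := by
    rwa [eq_comm, QuotientGroup.eq, inv_one, one_mul] at hedge
  have hxy' : (x * y) ^ (2 : ℤ) = 1 := mod_cast hxy
  rcases Int.even_or_odd' k with ⟨m, rfl | rfl⟩
  · rw [← hk, zpow_mul, hxy', one_zpow]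
  · rw [zpow_add_one, zpow_mul, hxy', one_zpow, one_mul] at hk
    exact absurd (by rw [one_mul, hk, hfix_base]) (hsimple.1 1)

-- The commutator is a rotation about both endpoints of the edge joining `x⟨y⟩` to `⟨y⟩`.
theorem commute_conj_of_mem_diagKernel (hsimple : IsSimple x y) (hxy : (x * y) ^ 2 = 1) {u v : G}
    (hu : u ∈ diagKernel x y) (hv : v ∈ diagKernel x y) (hxu : x * u * x⁻¹ ∈ diagSubgroup x y)
    (hxv : x⁻¹ * v * x ∈ diagSubgroup x y) : Commute (x * u * x⁻¹) v := by
  rw [← commutatorElement_eq_one_iff_commute]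
  refine eq_one_of_mem_zpowers_of_inv_conj_mem_zpowers hsimple hxy ?_ ?_
  · rw [commutatorElement_def]
    exact mul_mem (mem_diagKernel.1 hv _ hxu) (inv_mem (diagKernel_le_zpowers hv))
  · have hconj : x⁻¹ * ⁅x * u * x⁻¹, v⁆ * x =
        u * ((x⁻¹ * v * x) * u * (x⁻¹ * v * x)⁻¹)⁻¹ := by
      rw [commutatorElement_def]; group
    rw [hconj]
    exact mul_mem (diagKernel_le_zpowers hu) (inv_mem (mem_diagKernel.1 hu _ hxv))

-- The given reflection inverts `y` and interchanges `x` with `x⁻¹`; conjugating by `y` brings the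
-- neighbour `x⟨y⟩` back to `x⁻¹⟨y⟩`.
theorem exists_map_eq_inv_of_isReflexive (hrefl : IsReflexive x y) (hxy : (x * y) ^ 2 = 1)
    (n : ℕ) : ∃ τ : G →* G, τ y = y⁻¹ ∧ τ (x⁻¹ * y ^ n * x) = (x⁻¹ * y ^ n * x)⁻¹ := by
  obtain ⟨σ, hσx, hσy⟩ := hrefl
  refine ⟨(MulAut.conj y).toMonoidHom.comp σ.toMonoidHom, by simp [hσy], ?_⟩
  calc y * σ (x⁻¹ * y ^ n * x) * y⁻¹ = y * (x * (y ^ n)⁻¹ * x⁻¹) * y⁻¹ := by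
        simp only [map_mul, map_inv, map_pow, hσx, hσy, inv_inv, inv_pow]
    _ = x⁻¹ * (y ^ n)⁻¹ * x :=
        (inv_conj_eq_conj_conj hxy (inv_mem (Subgroup.npow_mem_zpowers y n))).symm
    _ = (x⁻¹ * y ^ n * x)⁻¹ := by group

theorem commute_conj_pow_four (hrefl : IsReflexive x y) (hxy : (x * y) ^ 2 = 1) {u : G}
    (hu : u ∈ diagKernel x y) : Commute (x * u * x⁻¹) (y ^ 4) := by
  obtain ⟨τ, hτy, hτt⟩ := exists_map_eq_inv_of_isReflexive hrefl hxy 2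
  have htu := mem_diagKernel.1 hu _ (inv_conj_pow_mem_diagSubgroup hxy even_two)
  have hcomm : Commute u ((x⁻¹ * y ^ 2 * x) ^ 2) := commute_sq_of_map_eq_inv hτt
    (map_eq_inv_of_mem_zpowers hτy (diagKernel_le_zpowers hu)) (map_eq_inv_of_mem_zpowers hτy htu)
  have ht : (x⁻¹ * y ^ 2 * x) ^ 2 = x⁻¹ * y ^ 4 * x := by rw [sq]; group
  rwa [commute_conj_left_iff, ← ht]

theorem commute_conj_of_commute_conj_neighbor (hgen : Subgroup.closure {x, y} = ⊤)
    (hxy : (x * y) ^ 2 = 1) (hx : x ^ 3 = 1) {u z : G} (hu : u ∈ diagKernel x y)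
    (hyz : Commute y z) (hxu : Commute (x * u * x⁻¹) z) (g : G) : Commute (g * u * g⁻¹) z := by
  have huz : Commute u z := by
    obtain ⟨m, rfl⟩ := diagKernel_le_zpowers hu
    exact hyz.zpow_left m
  have hxu_inv : Commute (x⁻¹ * u * x) z := by
    rw [inv_conj_eq_conj_conj hxy (diagKernel_le_zpowers hu), ← hyz.mul_inv_cancel]
    exact hxu.conj y
  obtain ⟨a, ha, d, hd, rfl⟩ := exists_eq_mul_diagSubgroup hgen hxy hx g
  obtain ⟨k, hk⟩ := exists_conj_eq_zpow_of_mem_diagKernel hu hd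
  have hconj : a * d * u * (a * d)⁻¹ = (a * u * a⁻¹) ^ k := by
    rw [conj_zpow, ← hk]; group
  rw [hconj]
  refine Commute.zpow_left ?_ k
  rcases ha with rfl | rfl | rfl
  · simpa using huz
  · exact hxu
  · rwa [inv_inv]

theorem commute_rot_pow_of_commute_conj {m n : ℕ}
    (h : ∀ c : G, Commute (c * y ^ m * c⁻¹) (y ^ n)) (v w : Vertex y) :
    Commute (rot y v ^ m) (rot y w ^ n) := by
  induction v using QuotientGroup.induction_on with
  | H a =>
  induction w using QuotientGroup.induction_on with
  | H b =>
  have hab : a * y ^ m * a⁻¹ = b * (b⁻¹ * a * y ^ m * (b⁻¹ * a)⁻¹) * b⁻¹ := by group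
  rw [rot_mk, rot_mk, conj_pow, conj_pow, hab]
  exact (h (b⁻¹ * a)).conj b

-- `0 < primPeriod x y` says that a primitive period exists; otherwise `sInf ∅ = 0`.
theorem evenPeriod_rotations_commute_general {x y : G} (hgen : Subgroup.closure {x, y} = ⊤)
    (hxy : (x * y) ^ 2 = 1) (hrefl : IsReflexive x y) (hsimple : IsSimple x y)
    (hx : x ^ 3 = 1) (hJ : 0 < primPeriod x y) (v w : Vertex y) :
    Commute (rot y v ^ evenPeriod x y) (rot y w ^ evenPeriod x y) ∧
      Commute (rot y v ^ evenPeriod x y) (rot y w ^ 4) := by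
  have hT := pow_evenPeriod_mem_diagKernel hsimple hxy hx hJ
  have hnbr : Commute (x * y ^ evenPeriod x y * x⁻¹) (y ^ evenPeriod x y) :=
    commute_conj_of_mem_diagKernel hsimple hxy hT hT
      (conj_pow_mem_diagSubgroup even_evenPeriod)
      (inv_conj_pow_mem_diagSubgroup hxy even_evenPeriod)
  have hnbr_four := commute_conj_pow_four hrefl hxy hT
  have hall {n : ℕ} (h : Commute (x * y ^ evenPeriod x y * x⁻¹) (y ^ n)) (g : G) :
      Commute (g * y ^ evenPeriod x y * g⁻¹) (y ^ n) :=
    commute_conj_of_commute_conj_neighbor hgen hxy hx hT (Commute.self_pow y n) h g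
  exact ⟨commute_rot_pow_of_commute_conj (hall hnbr) v w,
    commute_rot_pow_of_commute_conj (hall hnbr_four) v w⟩

end Commutation

/-- For a non-tetrahedral map as above, `S_v^T` commutes with `S_w^T` and with `S_w^4`
for all vertices `v, w`, where `T` is the even period. -/
theorem evenPeriod_rotations_commute
    (G : Type*) [Group G] [Finite G] (x y : G)
    (hgen : Subgroup.closure {x, y} = ⊤) (hxy : (x * y) ^ 2 = 1)
    (hrefl : IsReflexive x y) (hsimple : IsSimple x y)
    (hden : 2 * orderOf y ^ 2 > Nat.card G) (hp : orderOf x = 3)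
    (hnt : ¬ IsTet G x y) :
    ∀ v w : Vertex y,
      Commute (rot y v ^ evenPeriod x y) (rot y w ^ evenPeriod x y) ∧
      Commute (rot y v ^ evenPeriod x y) (rot y w ^ 4) :=
  evenPeriod_rotations_commute_general hgen hxy hrefl hsimple (hp ▸ pow_orderOf_eq_one x)
    (primPeriod_pos (isOfFinOrder_of_finite y))

end RegularMap
end

section
/- Let (G,x,y) encode a reflexive regular map that is simple, satisfies 2q² > |G| (density exceeding 1/2), has p = 3, and is not the tetrahedral map tet. Then: (i) S_v^T = S_{v'}^T whenever v' is a diagonal neighbour of v; (ii) for every g ∈ G, if v = g⟨y⟩, u = g*x⟨y⟩ and w = g*x²⟨y⟩ are the three vertices of the face g⟨x⟩, then S_v^T · S_u^T · S_w^T = 1 in G. -/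
namespace RegularMap

variable {G : Type*} [Group G]

/-! Alignment is a `G`-invariant equivalence relation on `G ⧸ ⟨y⟩`, so it is given by a subgroup `K`
containing `y`, and the whole argument takes place in the group `G`. Let `s = y²`, and let
`a = y ^ T`, `b = x a x⁻¹`, `c = x⁻¹ a x` be the even-period rotations about the vertices `1`, `x`,
`x⁻¹` of the base face. If `x ∈ K`, then `a` fixes the vertex `x` and so `a = 1`. Otherwise `a`, `b`
and `c` commute pairwise, and `s²` commutes with `c`. As `K` has index at least 3, the density bound
leaves no room in `x K x⁻¹` for disjoint subsets `⟨s⟩ R` and `c ⟨s²⟩ R`, where `R` is the group of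
rotations about `x`; hence `c = s ^ k * x h x⁻¹` with `h ∈ ⟨y⟩`. The reflection then shows that `s`
commutes with `x h x⁻¹`, so `K` centralizes `h`, and `h` is a power of `a`. Comparing with the
mirror image of `c = s ^ k * x h x⁻¹` gives first `s ^ k = h` and then `h = a⁻¹`, that is,
`c = a⁻¹ b⁻¹`. -/

section GroupTheory

open scoped Pointwise

theorem orderOf_le_two_mul_orderOf_sq (g : G) : orderOf g ≤ 2 * orderOf (g ^ 2) := by
  obtain h | h := (orderOf g).eq_zero_or_pos
  · simp [h]
  · have hsq : 0 < orderOf (g ^ 2) := (orderOf_pos_iff.mp h).pow.orderOf_pos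
    exact orderOf_le_of_pow_eq_one (by positivity) (by rw [pow_mul, pow_orderOf_eq_one])

theorem ncard_mul_of_disjoint {P Q : Subgroup G} (h : Disjoint P Q) :
    ((P : Set G) * (Q : Set G)).ncard = Nat.card P * Nat.card Q := by
  have hrange : (P : Set G) * (Q : Set G) = Set.range fun p : P × Q => (p.1 * p.2 : G) := by
    ext g
    simp [Set.mem_mul]
  rw [hrange, Set.ncard_def, ← Set.image_univ,
    (Subgroup.mul_injective_of_disjoint h).encard_image, ← Set.ncard_def, Set.ncard_univ,
    Nat.card_prod]

theorem disjoint_zpowers_mul_smul_zpowers_sq_mul {s c : G} {Q : Subgroup G}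
    (hcomm : Commute (s ^ 2) c) (hne : ∀ k : ℤ, (s ^ k)⁻¹ * c ∉ Q) :
    Disjoint ((Subgroup.zpowers s : Set G) * (Q : Set G))
      (c • ((Subgroup.zpowers (s ^ 2) : Set G) * (Q : Set G))) := by
  rw [Set.disjoint_left]
  rintro _ ⟨_, ⟨j, rfl⟩, q, hq, rfl⟩ ⟨_, ⟨_, ⟨i, rfl⟩, r, hr, rfl⟩, h⟩
  have h : c * ((s ^ 2) ^ i * r) = s ^ j * q := h
  rw [← mul_assoc, ← (hcomm.zpow_left i).eq, ← zpow_natCast s 2, ← zpow_mul] at h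
  apply hne (-((2 : ℕ) * i) + j)
  have hquot : (s ^ (-((2 : ℕ) * i) + j))⁻¹ * c = q * r⁻¹ := by
    rw [eq_mul_inv_iff_mul_eq, mul_assoc, inv_mul_eq_iff_eq_mul, zpow_add, zpow_neg, mul_assoc,
      eq_inv_mul_iff_mul_eq, ← mul_assoc, h]
  rw [hquot]
  exact mul_mem hq (inv_mem hr)

/- Otherwise `⟨s⟩ Q` and `c ⟨s²⟩ Q` are disjoint subsets of `L`, of sizes `|s| |Q|` and at least
`|s| |Q| / 2`. -/
theorem exists_inv_zpow_mul_mem_of_card_lt {s c : G} {Q L : Subgroup G} [Finite L]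
    (hsQ : Disjoint (Subgroup.zpowers s) Q) (hs : s ∈ L) (hQ : Q ≤ L) (hc : c ∈ L)
    (hcomm : Commute (s ^ 2) c) (hcard : 2 * Nat.card L < 3 * (orderOf s * Nat.card Q)) :
    ∃ k : ℤ, (s ^ k)⁻¹ * c ∈ Q := by
  by_contra! hne
  have hsq : Subgroup.zpowers (s ^ 2) ≤ Subgroup.zpowers s :=
    Subgroup.zpowers_le.mpr (pow_mem (Subgroup.mem_zpowers s) 2)
  have hsL : Subgroup.zpowers s ≤ L := Subgroup.zpowers_le.mpr hs
  have hD₁ : (Subgroup.zpowers s : Set G) * (Q : Set G) ⊆ L := by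
    rintro _ ⟨p, hp, q, hq, rfl⟩
    exact mul_mem (hsL hp) (hQ hq)
  have hD₂ : c • ((Subgroup.zpowers (s ^ 2) : Set G) * (Q : Set G)) ⊆ L := by
    rintro _ ⟨_, ⟨p, hp, q, hq, rfl⟩, rfl⟩
    exact mul_mem hc (mul_mem (hsL (hsq hp)) (hQ hq))
  have hL : (L : Set G).Finite := Set.toFinite _
  have hcardD := Set.ncard_le_ncard (Set.union_subset hD₁ hD₂) hL
  rw [Set.ncard_union_eq (disjoint_zpowers_mul_smul_zpowers_sq_mul hcomm hne) (hL.subset hD₁)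
    (hL.subset hD₂), Set.ncard_smul_set, ncard_mul_of_disjoint hsQ,
    ncard_mul_of_disjoint (hsQ.mono_left hsq), Nat.card_zpowers, Nat.card_zpowers,
    ← Nat.card_coe_set_eq] at hcardD
  have horder := Nat.mul_le_mul_right (Nat.card Q) (orderOf_le_two_mul_orderOf_sq s)
  change _ ≤ Nat.card L at hcardD
  linarith

theorem three_mul_card_le_of_notMem {K : Subgroup G} [K.FiniteIndex] {x : G} (hx : x ^ 3 = 1)
    (hxK : x ∉ K) : 3 * Nat.card K ≤ Nat.card G := by
  have hindex : 3 ≤ K.index := by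
    have h0 : K.index ≠ 0 := Subgroup.FiniteIndex.index_ne_zero
    have h1 : K.index ≠ 1 := fun h => hxK (Subgroup.index_eq_one.mp h ▸ Subgroup.mem_top x)
    have h2 : K.index ≠ 2 := fun h => hxK <| by
      have hx4 : x = (x ^ 2) ^ 2 := by rw [← pow_mul, pow_succ, hx, one_mul]
      exact hx4 ▸ pow_mem (Subgroup.sq_mem_of_index_two h x) 2
    omega
  rw [← K.card_mul_index, mul_comm]
  exact Nat.mul_le_mul_left _ hindex

theorem mem_zpowers_conj_iff {x y g : G} :
    g ∈ Subgroup.zpowers (x * y * x⁻¹) ↔ x⁻¹ * g * x ∈ Subgroup.zpowers y := by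
  simp only [Subgroup.mem_zpowers_iff, conj_zpow]
  exact exists_congr fun k => by rw [mul_inv_eq_iff_eq_mul, ← eq_inv_mul_iff_mul_eq, mul_assoc]

theorem conj_mem_zpowers_conj {x y g : G} (hg : g ∈ Subgroup.zpowers y) :
    x * g * x⁻¹ ∈ Subgroup.zpowers (x * y * x⁻¹) :=
  mem_zpowers_conj_iff.mpr (by group; exact hg)

theorem eq_one_or_eq_of_mem_zpowers {z g : G} (hz : z ^ 2 = 1) (hg : g ∈ Subgroup.zpowers z) :
    g = 1 ∨ g = z := by
  obtain ⟨k, rfl⟩ := hg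
  have hz' : z ^ (2 : ℤ) = 1 := mod_cast hz
  obtain ⟨m, rfl | rfl⟩ := Int.even_or_odd' k
  · simp [zpow_mul, hz']
  · simp [zpow_add, zpow_mul, hz']

theorem commute_sq_of_conj_eq_conj {s z c : G} (hz : z ^ 2 = 1) (h : s⁻¹ * c * s = z * c * z⁻¹)
    (hc : s⁻¹ * c * s ∈ Subgroup.zpowers c) : Commute (s ^ 2) c := by
  obtain ⟨m, hm⟩ := hc
  have hm : c ^ m = s⁻¹ * c * s := hm
  have hzz : c = (c ^ m) ^ m := calc
    c = z ^ 2 * c * (z ^ 2)⁻¹ := by simp [hz]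
    _ = z * (z * c * z⁻¹) * z⁻¹ := by rw [pow_two]; group
    _ = (c ^ m) ^ m := by rw [← h, ← hm, ← conj_zpow, ← h, ← hm]
  have hss : s⁻¹ * (s⁻¹ * c * s) * s = c := by
    have := conj_zpow (i := m) (a := s⁻¹) (b := c)
    rw [inv_inv] at this
    rw [← hm, ← this, ← hm, ← hzz]
  calc s ^ 2 * c = s ^ 2 * (s⁻¹ * (s⁻¹ * c * s) * s) := by rw [hss]
    _ = c * s ^ 2 := by rw [pow_two]; group

theorem zpow_mem_iff_sInf_dvd (H : Subgroup G) (y : G) (e : ℤ) :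
    y ^ e ∈ H ↔ ((sInf {j : ℕ | 1 ≤ j ∧ y ^ j ∈ H} : ℕ) : ℤ) ∣ e := by
  have hmk (g : G) : g • (QuotientGroup.mk 1 : G ⧸ H) = QuotientGroup.mk 1 ↔ g ∈ H := by
    rw [MulAction.Quotient.smul_mk, eq_comm, QuotientGroup.eq]
    simp
  have hset : {j : ℕ | 1 ≤ j ∧ y ^ j ∈ H} =
      {j | 0 < j ∧ Function.IsPeriodicPt (y • ·) j (QuotientGroup.mk 1 : G ⧸ H)} := by
    ext j
    simp only [Set.mem_ofPred_eq, Function.IsPeriodicPt, Function.IsFixedPt, smul_iterate, hmk,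
      Nat.succ_le_iff]
  rw [hset, ← Function.minimalPeriod_eq_sInf_n_pos_IsPeriodicPt,
    ← MulAction.zpow_smul_eq_iff_minimalPeriod_dvd, hmk]

theorem commute_of_mem_zpowers {z g h : G} (hg : g ∈ Subgroup.zpowers z)
    (hh : h ∈ Subgroup.zpowers z) : Commute g h := by
  obtain ⟨i, rfl⟩ := hg
  obtain ⟨j, rfl⟩ := hh
  exact Commute.zpow_zpow_self z i j

theorem map_eq_inv_of_mem_zpowers_s11 {σ : G →* G} {y a : G} (hσ : σ y = y⁻¹)
    (ha : a ∈ Subgroup.zpowers y) : σ a = a⁻¹ := by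
  obtain ⟨k, rfl⟩ := ha
  simp [hσ]

end GroupTheory


section FaceRelations

variable {x y : G}

theorem mul_eq_inv_mul_inv (hxy : (x * y) ^ 2 = 1) : y * x = x⁻¹ * y⁻¹ := by
  rw [eq_inv_mul_iff_mul_eq, eq_inv_iff_mul_eq_one, ← hxy, pow_two]
  group

theorem mul_self_eq_inv_s11 (hx : x ^ 3 = 1) : x * x = x⁻¹ :=
  eq_inv_of_mul_eq_one_left (by rw [← pow_three', hx])

theorem inv_mul_inv_eq_self (hx : x ^ 3 = 1) : x⁻¹ * x⁻¹ = x := by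
  rw [← mul_inv_rev, mul_self_eq_inv_s11 hx, inv_inv]

theorem inv_mul_mul_eq_mul_inv (hx : x ^ 3 = 1) (hxy : (x * y) ^ 2 = 1) :
    x⁻¹ * y * x = x * y⁻¹ := by
  rw [mul_assoc, mul_eq_inv_mul_inv hxy, ← mul_assoc, inv_mul_inv_eq_self hx]

theorem conj_conj_eq_inv_conj (hx : x ^ 3 = 1) (a : G) :
    x * (x * a * x⁻¹) * x⁻¹ = x⁻¹ * a * x := calc
  x * (x * a * x⁻¹) * x⁻¹ = x * x * a * (x⁻¹ * x⁻¹) := by group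
  _ = x⁻¹ * a * x := by
    rw [mul_self_eq_inv_s11 hx, inv_mul_inv_eq_self hx]

theorem rotation_conj_conj (hxy : (x * y) ^ 2 = 1) {a : G} (ha : Commute y a) :
    y * (x * a * x⁻¹) * y⁻¹ = x⁻¹ * a * x := calc
  y * (x * a * x⁻¹) * y⁻¹ = y * x * a * (y * x)⁻¹ := by group
  _ = x⁻¹ * (y⁻¹ * a * y) * x := by rw [mul_eq_inv_mul_inv hxy]; group
  _ = x⁻¹ * a * x := by rw [mul_assoc y⁻¹, ← ha.eq, inv_mul_cancel_left]

theorem inv_sq_conj_inv_conj (hx : x ^ 3 = 1) (hxy : (x * y) ^ 2 = 1) {a : G} (ha : Commute y a) :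
    (y ^ 2)⁻¹ * (x⁻¹ * a * x) * y ^ 2 = x * y * (x⁻¹ * a * x) * (x * y)⁻¹ := by
  have hyx : (y ^ 2)⁻¹ * x⁻¹ = x * y * x⁻¹ * y := by
    have hinv : x * y = y⁻¹ * x⁻¹ := by
      rw [← mul_inv_rev]
      exact eq_inv_of_mul_eq_one_left (by rw [← pow_two, hxy])
    calc (y ^ 2)⁻¹ * x⁻¹ = y⁻¹ * (x * y) := by rw [hinv, pow_two]; group
      _ = x * (y * x) * (x * y) := by rw [mul_eq_inv_mul_inv hxy, mul_inv_cancel_left]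
      _ = x * y * (x * x) * y := by group
      _ = x * y * x⁻¹ * y := by rw [mul_self_eq_inv_s11 hx]
  calc (y ^ 2)⁻¹ * (x⁻¹ * a * x) * y ^ 2
      = (y ^ 2)⁻¹ * x⁻¹ * a * ((y ^ 2)⁻¹ * x⁻¹)⁻¹ := by group
    _ = x * y * x⁻¹ * (y * a * y⁻¹) * (x * y * x⁻¹)⁻¹ := by rw [hyx]; group
    _ = x * y * (x⁻¹ * a * x) * (x * y)⁻¹ := by rw [ha.eq]; group

end FaceRelations

section Alignment

variable {x y : G}

/-- The stabilizer in `G` of the alignment class of the base vertex `⟨y⟩`, given by generators: the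
vertices `g⟨y⟩` and `h⟨y⟩` are aligned iff `g⁻¹ * h` lies in it, see `aligned_mk_iff`. -/
def alignedStabilizer (x y : G) : Subgroup G :=
  Subgroup.closure {y, x⁻¹ * y ^ 2 * x}

/-- The elements of `G` that fix every vertex aligned with the base vertex `⟨y⟩`. It is encoded
without reference to the action: `g` fixes the vertex `k⟨y⟩` iff `k⁻¹ * g * k ∈ ⟨y⟩`. -/
def alignedFixer (x y : G) : Subgroup G :=
  ⨅ k ∈ alignedStabilizer x y, (Subgroup.zpowers y).comap (MulAut.conj k⁻¹).toMonoidHom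

/-- The elements of `G` that preserve the alignment class of each of the three vertices `⟨y⟩`,
`x⟨y⟩` and `x⁻¹⟨y⟩` of the base face. -/
def faceStabilizer (x y : G) : Subgroup G :=
  alignedStabilizer x y ⊓ (alignedStabilizer x y).comap (MulAut.conj x⁻¹).toMonoidHom ⊓
    (alignedStabilizer x y).comap (MulAut.conj x).toMonoidHom

/-- The even-period rotations about the base vertex: unless all vertices are aligned, this is the
cyclic group generated by `y ^ T`, see `evenFixer_eq_zpowers`. -/
def evenFixer (x y : G) : Subgroup G :=
  alignedFixer x y ⊓ faceStabilizer x y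

theorem rotation_mem_alignedStabilizer (x y : G) : y ∈ alignedStabilizer x y :=
  Subgroup.subset_closure (Set.mem_insert _ _)

theorem diagonal_mem_alignedStabilizer (x y : G) : x⁻¹ * y ^ 2 * x ∈ alignedStabilizer x y :=
  Subgroup.subset_closure (Set.mem_insert_of_mem _ rfl)

theorem mem_alignedFixer_iff {g : G} :
    g ∈ alignedFixer x y ↔ ∀ k ∈ alignedStabilizer x y, k⁻¹ * g * k ∈ Subgroup.zpowers y := by
  simp [alignedFixer, Subgroup.mem_iInf]

theorem mem_faceStabilizer_iff {g : G} :
    g ∈ faceStabilizer x y ↔ g ∈ alignedStabilizer x y ∧ x⁻¹ * g * x ∈ alignedStabilizer x y ∧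
      x * g * x⁻¹ ∈ alignedStabilizer x y := by
  simp [faceStabilizer, and_assoc]

theorem mem_zpowers_of_mem_alignedFixer {g : G} (hg : g ∈ alignedFixer x y) :
    g ∈ Subgroup.zpowers y := by
  simpa using mem_alignedFixer_iff.mp hg 1 (one_mem _)

theorem conj_mem_alignedFixer {k g : G} (hk : k ∈ alignedStabilizer x y)
    (hg : g ∈ alignedFixer x y) : k * g * k⁻¹ ∈ alignedFixer x y := by
  rw [mem_alignedFixer_iff] at hg ⊢
  intro l hl
  simpa [mul_assoc] using hg (k⁻¹ * l) (mul_mem (inv_mem hk) hl)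

theorem mem_alignedFixer_of_commute {g : G} (hg : g ∈ Subgroup.zpowers y)
    (hcomm : Commute g (x⁻¹ * y ^ 2 * x)) : g ∈ alignedFixer x y := by
  have hcentral : alignedStabilizer x y ≤ Subgroup.centralizer {g} := by
    rw [alignedStabilizer, Subgroup.closure_le, Set.insert_subset_iff, Set.singleton_subset_iff]
    exact ⟨Subgroup.mem_centralizer_singleton_iff.mpr
        (commute_of_mem_zpowers (Subgroup.mem_zpowers y) hg).eq,
      Subgroup.mem_centralizer_singleton_iff.mpr hcomm.eq.symm⟩
  refine mem_alignedFixer_iff.mpr fun k hk => ?_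
  rwa [mul_assoc, ← Subgroup.mem_centralizer_singleton_iff.mp (hcentral hk), inv_mul_cancel_left]

theorem conj_mem_faceStabilizer (hx : x ^ 3 = 1) {g : G} (hg : g ∈ faceStabilizer x y) :
    x * g * x⁻¹ ∈ faceStabilizer x y := by
  obtain ⟨h₁, h₂, h₃⟩ := mem_faceStabilizer_iff.mp hg
  refine mem_faceStabilizer_iff.mpr ⟨h₃, by group; exact h₁, ?_⟩
  rwa [conj_conj_eq_inv_conj hx]

theorem inv_conj_mem_faceStabilizer (hx : x ^ 3 = 1) {g : G} (hg : g ∈ faceStabilizer x y) :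
    x⁻¹ * g * x ∈ faceStabilizer x y := by
  rw [← conj_conj_eq_inv_conj hx]
  exact conj_mem_faceStabilizer hx (conj_mem_faceStabilizer hx hg)

theorem sq_mem_faceStabilizer (hxy : (x * y) ^ 2 = 1) : y ^ 2 ∈ faceStabilizer x y := by
  have hy := rotation_mem_alignedStabilizer x y
  have hd := diagonal_mem_alignedStabilizer x y
  refine mem_faceStabilizer_iff.mpr ⟨pow_mem hy 2, hd, ?_⟩
  have hconj : y⁻¹ * (x⁻¹ * y ^ 2 * x) * y = x * y ^ 2 * x⁻¹ := by
    rw [← rotation_conj_conj hxy (Commute.self_pow y 2)]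
    group
  exact hconj ▸ mul_mem (mul_mem (inv_mem hy) hd) hy

/- For odd `e` the element `x⁻¹ y ^ e x` is congruent to `x⁻¹ y x = x y⁻¹` modulo `⟨x⁻¹ y² x⟩`. -/
theorem even_of_zpow_mem_faceStabilizer (hx : x ^ 3 = 1) (hxy : (x * y) ^ 2 = 1)
    (hK : x ∉ alignedStabilizer x y) {e : ℤ} (he : y ^ e ∈ faceStabilizer x y) : Even e := by
  by_contra hodd
  obtain ⟨m, rfl⟩ := Int.not_even_iff_odd.mp hodd
  rw [zpow_add, zpow_mul, zpow_one, Subgroup.mul_mem_cancel_left _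
    (zpow_mem (mod_cast sq_mem_faceStabilizer hxy) m)] at he
  have hxy' := (mem_faceStabilizer_iff.mp he).2.1
  rw [inv_mul_mul_eq_mul_inv hx hxy,
    Subgroup.mul_mem_cancel_right _ (inv_mem (rotation_mem_alignedStabilizer x y))] at hxy'
  exact hK hxy'

theorem zpow_mem_faceStabilizer_iff (hx : x ^ 3 = 1) (hxy : (x * y) ^ 2 = 1)
    (hK : x ∉ alignedStabilizer x y) {e : ℤ} : y ^ e ∈ faceStabilizer x y ↔ (2 : ℤ) ∣ e := by
  refine ⟨fun he => (even_of_zpow_mem_faceStabilizer hx hxy hK he).two_dvd, ?_⟩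
  rintro ⟨m, rfl⟩
  rw [zpow_mul]
  exact zpow_mem (mod_cast sq_mem_faceStabilizer hxy) m

theorem conj_mem_evenFixer {m a : G} (hm : m ∈ faceStabilizer x y) (ha : a ∈ evenFixer x y) :
    m * a * m⁻¹ ∈ evenFixer x y :=
  ⟨conj_mem_alignedFixer (mem_faceStabilizer_iff.mp hm).1 ha.1,
    Subgroup.mul_mem _ (Subgroup.mul_mem _ hm ha.2) (Subgroup.inv_mem _ hm)⟩

theorem mem_zpowers_of_mem_evenFixer {a : G} (ha : a ∈ evenFixer x y) : a ∈ Subgroup.zpowers y :=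
  mem_zpowers_of_mem_alignedFixer ha.1

end Alignment

section Vertices

variable {x y : G}

theorem IsSimple.disjoint_zpowers (hxy : (x * y) ^ 2 = 1) (hs : IsSimple x y) :
    Disjoint (Subgroup.zpowers y) (Subgroup.zpowers (x * y * x⁻¹)) := by
  rw [Subgroup.disjoint_def]
  intro g hgy hgx
  have hends : ({QuotientGroup.mk g, QuotientGroup.mk (g * x * y)} : Set (Vertex y)) =
      {QuotientGroup.mk 1, QuotientGroup.mk (1 * x * y)} := by
    have h₁ : (QuotientGroup.mk g : Vertex y) = QuotientGroup.mk 1 := by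
      simpa [QuotientGroup.eq] using hgy
    have h₂ : (QuotientGroup.mk (g * x * y) : Vertex y) = QuotientGroup.mk (1 * x * y) := by
      rw [QuotientGroup.mk_mul_of_mem _ (Subgroup.mem_zpowers y),
        QuotientGroup.mk_mul_of_mem _ (Subgroup.mem_zpowers y), eq_comm, QuotientGroup.eq, one_mul,
        ← mul_assoc]
      exact mem_zpowers_conj_iff.mp hgx
    rw [h₁, h₂]
  have hg : g ∈ Subgroup.zpowers (x * y) := by
    simpa [QuotientGroup.eq] using hs.2 g 1 hends
  refine (eq_one_or_eq_of_mem_zpowers hxy hg).resolve_right fun h => hs.1 1 ?_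
  rwa [QuotientGroup.eq, inv_one, one_mul, one_mul, ← h]

theorem adj_iff (hxy : (x * y) ^ 2 = 1) (hs : IsSimple x y) {v w : Vertex y} :
    Adj x y v w ↔ ∃ g : G, v = QuotientGroup.mk (g * x) ∧ w = QuotientGroup.mk g := by
  have hmk (g : G) : (QuotientGroup.mk (g * x * y) : Vertex y) = QuotientGroup.mk (g * x) :=
    QuotientGroup.mk_mul_of_mem _ (Subgroup.mem_zpowers y)
  constructor
  · rintro ⟨hne, g, hg⟩
    obtain ⟨rfl, rfl⟩ | ⟨rfl, rfl⟩ := Set.pair_eq_pair_iff.mp hg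
    · refine ⟨g * x * y, ?_, rfl⟩
      rw [← hmk, mul_assoc _ x y, mul_assoc g x y, mul_assoc g, ← pow_two, hxy, mul_one]
    · exact ⟨g, hmk g, rfl⟩
  · rintro ⟨g, rfl, rfl⟩
    exact ⟨hmk g ▸ (hs.1 g).symm, g, by rw [hmk, Set.pair_comm]⟩

theorem diagNeighbor_iff (hxy : (x * y) ^ 2 = 1) (hs : IsSimple x y) {v v' : Vertex y} :
    DiagNeighbor x y v v' ↔
      ∃ g : G, v = QuotientGroup.mk g ∧ v' = QuotientGroup.mk (g * (x⁻¹ * y ^ 2 * x)) := by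
  have hrot (g : G) : rot y (QuotientGroup.mk g : Vertex y) ^ 2 • (QuotientGroup.mk (g * x) :
      Vertex y) = QuotientGroup.mk (g * x * (x⁻¹ * y ^ 2 * x)) := by
    rw [MulAction.Quotient.smul_mk]
    exact congrArg QuotientGroup.mk (by change (g * y * g⁻¹) ^ 2 * _ = _; rw [conj_pow]; group)
  simp only [DiagNeighbor, adj_iff hxy hs]
  constructor
  · rintro ⟨_, ⟨g, rfl, rfl⟩, rfl⟩
    exact ⟨g * x, rfl, hrot g⟩
  · rintro ⟨g, rfl, rfl⟩
    exact ⟨_, ⟨g * x⁻¹, by rw [inv_mul_cancel_right], rfl⟩, by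
      simpa using (hrot (g * x⁻¹)).symm⟩

theorem aligned_mk_iff [Finite G] (hxy : (x * y) ^ 2 = 1) (hs : IsSimple x y) {g h : G} :
    Aligned x y (QuotientGroup.mk g) (QuotientGroup.mk h) ↔ g⁻¹ * h ∈ alignedStabilizer x y := by
  have hy : Subgroup.zpowers y ≤ alignedStabilizer x y :=
    Subgroup.zpowers_le.mpr (rotation_mem_alignedStabilizer x y)
  constructor
  · intro hgh
    generalize hv : (QuotientGroup.mk h : Vertex y) = v at hgh
    induction hgh generalizing h with
    | refl => exact hy (QuotientGroup.eq.mp hv.symm)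
    | tail _ hd ih =>
      obtain ⟨k, hk, rfl⟩ := (diagNeighbor_iff hxy hs).mp hd
      have hkh := mul_mem (diagonal_mem_alignedStabilizer x y) (hy (QuotientGroup.eq.mp hv.symm))
      simpa [mul_assoc] using mul_mem (ih hk.symm) hkh
  · intro hgh
    suffices h : ∀ k ∈ alignedStabilizer x y,
        Aligned x y (QuotientGroup.mk g) (QuotientGroup.mk (g * k)) by
      simpa using h _ hgh
    intro k hk
    rw [alignedStabilizer, ← Subgroup.mem_toSubmonoid, Subgroup.closure_toSubmonoid_of_finite] at hk
    induction hk using Submonoid.closure_induction_right with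
    | one =>
      rw [mul_one]
      exact Relation.ReflTransGen.refl
    | mul_right k _ d hd ih =>
      obtain rfl | rfl := hd
      · rwa [← mul_assoc, QuotientGroup.mk_mul_of_mem _ (Subgroup.mem_zpowers d)]
      · exact ih.tail ((diagNeighbor_iff hxy hs).mpr ⟨g * k, rfl, by rw [mul_assoc g]⟩)

theorem rot_mk_pow (g : G) (n : ℕ) :
    rot y (QuotientGroup.mk g : Vertex y) ^ n = g * y ^ n * g⁻¹ :=
  conj_pow

theorem pow_mem_alignedFixer_iff [Finite G] (hxy : (x * y) ^ 2 = 1) (hs : IsSimple x y) {j : ℕ} :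
    y ^ j ∈ alignedFixer x y ↔
      ∀ v v' : Vertex y, Aligned x y v v' → rot y v ^ j • v' = v' := by
  have hfix (g h : G) : rot y (QuotientGroup.mk g : Vertex y) ^ j • (QuotientGroup.mk h : Vertex y)
      = QuotientGroup.mk h ↔ (g⁻¹ * h)⁻¹ * y ^ j * (g⁻¹ * h) ∈ Subgroup.zpowers y := by
    rw [rot_mk_pow, MulAction.Quotient.smul_mk, eq_comm, QuotientGroup.eq]
    simp [mul_assoc]
  simp only [mem_alignedFixer_iff, QuotientGroup.mk_surjective.forall, hfix, aligned_mk_iff hxy hs]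
  exact ⟨fun H g h => H _, fun H k hk => by simpa using H 1 k (by simpa using hk)⟩

theorem zpow_mem_alignedFixer_iff [Finite G] (hxy : (x * y) ^ 2 = 1) (hs : IsSimple x y) {e : ℤ} :
    y ^ e ∈ alignedFixer x y ↔ (primPeriod x y : ℤ) ∣ e := by
  simp only [primPeriod, ← pow_mem_alignedFixer_iff hxy hs, zpow_mem_iff_sInf_dvd]

theorem pow_evenPeriod_mem_alignedFixer [Finite G] (hxy : (x * y) ^ 2 = 1) (hs : IsSimple x y) :
    y ^ evenPeriod x y ∈ alignedFixer x y := by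
  rw [← zpow_natCast, zpow_mem_alignedFixer_iff hxy hs]
  exact_mod_cast Nat.dvd_lcm_left _ _

theorem evenFixer_eq_zpowers [Finite G] (hx : x ^ 3 = 1) (hxy : (x * y) ^ 2 = 1)
    (hs : IsSimple x y) (hK : x ∉ alignedStabilizer x y) :
    evenFixer x y = Subgroup.zpowers (y ^ evenPeriod x y) := by
  have hmem (e : ℤ) : y ^ e ∈ evenFixer x y ↔ (evenPeriod x y : ℤ) ∣ e := by
    rw [evenFixer, Subgroup.mem_inf, zpow_mem_alignedFixer_iff hxy hs,
      zpow_mem_faceStabilizer_iff hx hxy hK, Int.natCast_dvd, Int.natCast_dvd, evenPeriod,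
      Nat.lcm_dvd_iff]
    exact and_congr_right' (Int.natCast_dvd (m := 2))
  apply le_antisymm
  · intro g hg
    obtain ⟨e, rfl⟩ := mem_zpowers_of_mem_evenFixer hg
    obtain ⟨m, rfl⟩ := (hmem e).mp hg
    exact ⟨m, by simp [zpow_mul]⟩
  · rw [Subgroup.zpowers_le, ← zpow_natCast, hmem]

end Vertices

section BaseFace

variable {x y : G}

/- The commutator of `a` and `x a' x⁻¹` is a rotation about both of the vertices `1` and `x`. -/
theorem commute_conj_of_mem_evenFixer (hx : x ^ 3 = 1)
    (hd : Disjoint (Subgroup.zpowers y) (Subgroup.zpowers (x * y * x⁻¹))) {a a' : G}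
    (ha : a ∈ evenFixer x y) (ha' : a' ∈ evenFixer x y) : Commute a (x * a' * x⁻¹) := by
  have hy : a * ((x * a' * x⁻¹) * a⁻¹ * (x * a' * x⁻¹)⁻¹) ∈ Subgroup.zpowers y :=
    mem_zpowers_of_mem_evenFixer
      (mul_mem ha (conj_mem_evenFixer (conj_mem_faceStabilizer hx ha'.2) (inv_mem ha)))
  have hxy : (x⁻¹ * a * x) * a' * (x⁻¹ * a * x)⁻¹ * a'⁻¹ ∈ Subgroup.zpowers y :=
    mem_zpowers_of_mem_evenFixer
      (mul_mem (conj_mem_evenFixer (inv_conj_mem_faceStabilizer hx ha.2) ha') (inv_mem ha'))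
  rw [commute_iff_eq, ← mul_inv_eq_one, mul_inv_rev]
  refine Subgroup.disjoint_def.mp hd (by simpa [mul_assoc] using hy) ?_
  rw [mem_zpowers_conj_iff]
  simpa [mul_assoc] using hxy

theorem commute_sq_sq_inv_conj (hx : x ^ 3 = 1) (hxy : (x * y) ^ 2 = 1) {a : G}
    (hE : evenFixer x y = Subgroup.zpowers a) : Commute ((y ^ 2) ^ 2) (x⁻¹ * a * x) := by
  have ha : a ∈ evenFixer x y := hE ▸ Subgroup.mem_zpowers a
  have hya : Commute y a :=
    commute_of_mem_zpowers (Subgroup.mem_zpowers y) (mem_zpowers_of_mem_evenFixer ha)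
  refine commute_sq_of_conj_eq_conj hxy (inv_sq_conj_inv_conj hx hxy hya) ?_
  have hm : x * (y ^ 2)⁻¹ * x⁻¹ ∈ faceStabilizer x y :=
    conj_mem_faceStabilizer hx (inv_mem (sq_mem_faceStabilizer hxy))
  have hconj := hE ▸ conj_mem_evenFixer hm ha
  have hc : x⁻¹ * a * x = x⁻¹ * a * x⁻¹⁻¹ := by rw [inv_inv]
  rw [hc, mem_zpowers_conj_iff]
  simpa [mul_assoc] using hconj

theorem exists_inv_conj_eq_zpow_mul_conj [Finite G] (hx : x ^ 3 = 1) (hxy : (x * y) ^ 2 = 1)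
    (hd : Disjoint (Subgroup.zpowers y) (Subgroup.zpowers (x * y * x⁻¹)))
    (hden : 4 * Nat.card G < 9 * orderOf y ^ 2) (hK : x ∉ alignedStabilizer x y) {a : G}
    (hE : evenFixer x y = Subgroup.zpowers a) :
    ∃ k : ℤ, ∃ h ∈ Subgroup.zpowers y, x⁻¹ * a * x = (y ^ 2) ^ k * (x * h * x⁻¹) := by
  have ha : a ∈ evenFixer x y := hE ▸ Subgroup.mem_zpowers a
  set L := (alignedStabilizer x y).map (MulAut.conj x).toMonoidHom
  have hL {g : G} (hg : x⁻¹ * g * x ∈ alignedStabilizer x y) : g ∈ L :=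
    ⟨_, hg, by simp [mul_assoc]⟩
  have hcard : 2 * Nat.card L <
      3 * (orderOf (y ^ 2) * Nat.card (Subgroup.zpowers (x * y * x⁻¹))) := by
    have hq : orderOf (x * y * x⁻¹) = orderOf y :=
      orderOf_injective (MulAut.conj x).toMonoidHom (MulAut.conj x).injective y
    rw [Subgroup.card_map_of_injective (MulAut.conj x).injective, Nat.card_zpowers, hq]
    have hK' := three_mul_card_le_of_notMem hx hK
    have horder := Nat.mul_le_mul_right (orderOf y) (orderOf_le_two_mul_orderOf_sq y)
    rw [pow_two] at hden
    linarith
  obtain ⟨k, hk⟩ := exists_inv_zpow_mul_mem_of_card_lt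
    (hd.mono_left (Subgroup.zpowers_le.mpr (pow_mem (Subgroup.mem_zpowers y) 2)))
    (hL (diagonal_mem_alignedStabilizer x y))
    (Subgroup.zpowers_le.mpr (hL (by simpa [mul_assoc] using rotation_mem_alignedStabilizer x y)))
    (hL (mem_faceStabilizer_iff.mp (inv_conj_mem_faceStabilizer hx ha.2)).2.1)
    (commute_sq_sq_inv_conj hx hxy hE) hcard
  exact ⟨k, _, mem_zpowers_conj_iff.mp hk, by group⟩

theorem commute_sq_conj_of_inv_conj_eq {σ : G →* G} (hσx : σ x = x⁻¹) (hσy : σ y = y⁻¹)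
    (hx : x ^ 3 = 1) (hxy : (x * y) ^ 2 = 1)
    (hd : Disjoint (Subgroup.zpowers y) (Subgroup.zpowers (x * y * x⁻¹))) {a h : G} {k : ℤ}
    (ha : a ∈ evenFixer x y) (hh : h ∈ Subgroup.zpowers y)
    (hc : x⁻¹ * a * x = (y ^ 2) ^ k * (x * h * x⁻¹)) : Commute (y ^ 2) (x * h * x⁻¹) := by
  have hay := mem_zpowers_of_mem_evenFixer ha
  have hσa := map_eq_inv_of_mem_zpowers_s11 hσy hay
  have hσh := map_eq_inv_of_mem_zpowers_s11 hσy hh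
  have hyh := commute_of_mem_zpowers (Subgroup.mem_zpowers y) hh
  have hya := commute_of_mem_zpowers (Subgroup.mem_zpowers y) hay
  have hb : Commute ((y ^ 2) ^ k) (x * a * x⁻¹) := by
    have hcb : Commute (x⁻¹ * a * x) (x * a * x⁻¹) := by
      rw [← conj_conj_eq_inv_conj hx]
      exact (commute_conj_of_mem_evenFixer hx hd ha ha).symm.map (MulAut.conj x)
    have hhb : Commute (x * h * x⁻¹) (x * a * x⁻¹) :=
      (commute_of_mem_zpowers hh hay).map (MulAut.conj x)
    rw [← mul_inv_eq_of_eq_mul hc]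
    exact hcb.mul_left hhb.inv_left
  have hkc : Commute ((y ^ 2) ^ k) (x⁻¹ * a * x) := by
    have hσs : σ ((y ^ 2) ^ k) = ((y ^ 2) ^ k)⁻¹ := by simp [hσy]
    have hσb : σ (x * a * x⁻¹) = (x⁻¹ * a * x)⁻¹ := by simp [hσx, hσa, mul_assoc]
    have h := hb.map σ
    rwa [hσs, hσb, Commute.inv_left_iff, Commute.inv_right_iff] at h
  have hinv : (x * h * x⁻¹)⁻¹ = y ^ 2 * (x * h * x⁻¹)⁻¹ * (y ^ 2)⁻¹ := calc
    (x * h * x⁻¹)⁻¹ = (x⁻¹ * a * x)⁻¹ * (y ^ 2) ^ k := by rw [hc]; group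
    _ = (y ^ 2) ^ k * (x⁻¹ * a * x)⁻¹ := hkc.inv_right.eq.symm
    _ = y * ((y ^ 2) ^ k * (x * a * x⁻¹)⁻¹) * y⁻¹ := by
      rw [← rotation_conj_conj hxy hya]; group
    _ = y * σ ((y ^ 2) ^ (-k) * (x⁻¹ * a * x)) * y⁻¹ := by simp [hσx, hσy, hσa, mul_assoc]
    _ = y * (x⁻¹ * h⁻¹ * x) * y⁻¹ := by rw [hc]; simp [hσx, hσh, mul_assoc]
    _ = y ^ 2 * (x * h * x⁻¹)⁻¹ * (y ^ 2)⁻¹ := by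
      rw [← rotation_conj_conj hxy hyh.inv_right, pow_two]; group
  exact Commute.inv_right_iff.mp (mul_inv_eq_iff_eq_mul.mp hinv.symm)

/- Applying `σ` and then a rotation of the face to `hc` gives `x⁻¹ a x = h * x s x⁻¹`, so that
`h⁻¹ s` is a rotation about both of the vertices `1` and `x`. -/
theorem inv_conj_eq_mul_conj_self {σ : G →* G} (hσx : σ x = x⁻¹) (hσy : σ y = y⁻¹)
    (hx : x ^ 3 = 1) (hd : Disjoint (Subgroup.zpowers y) (Subgroup.zpowers (x * y * x⁻¹)))
    {a s h : G} (ha : a ∈ Subgroup.zpowers y) (hs : s ∈ Subgroup.zpowers y)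
    (hh : h ∈ Subgroup.zpowers y) (hc : x⁻¹ * a * x = s * (x * h * x⁻¹)) :
    x⁻¹ * a * x = h * (x * h * x⁻¹) := by
  have hσa := map_eq_inv_of_mem_zpowers_s11 hσy ha
  have hσs := map_eq_inv_of_mem_zpowers_s11 hσy hs
  have hσh := map_eq_inv_of_mem_zpowers_s11 hσy hh
  have hb : x * a * x⁻¹ = x⁻¹ * h * x * s := by
    have hσ := congrArg (fun g => (σ g)⁻¹) hc
    simpa [hσx, hσa, hσs, hσh, mul_assoc] using hσ
  have hc' : x⁻¹ * a * x = h * (x * s * x⁻¹) := by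
    rw [← conj_conj_eq_inv_conj hx, hb]
    group
  have hsh : h⁻¹ * s = 1 := by
    refine Subgroup.disjoint_def.mp hd (mul_mem (inv_mem hh) hs) (mem_zpowers_conj_iff.mpr ?_)
    have hconj : x⁻¹ * (h⁻¹ * s) * x = s * h⁻¹ := by
      have hswap : h⁻¹ * s = x * s * x⁻¹ * (x * h * x⁻¹)⁻¹ := by
        rw [eq_mul_inv_iff_mul_eq, mul_assoc, ← hc, hc', inv_mul_cancel_left]
      rw [hswap]
      group
    exact hconj ▸ mul_mem hs (inv_mem hh)
  rw [hc, ← inv_mul_eq_one.mp hsh]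

theorem eq_inv_of_inv_conj_eq_mul_conj (hx : x ^ 3 = 1)
    (hd : Disjoint (Subgroup.zpowers y) (Subgroup.zpowers (x * y * x⁻¹))) {a h : G}
    (ha : a ∈ Subgroup.zpowers y) (hh : h ∈ Subgroup.zpowers a)
    (hcomm : Commute h (x * h * x⁻¹)) (hc : x⁻¹ * a * x = h * (x * h * x⁻¹)) : h = a⁻¹ := by
  obtain ⟨i, hi⟩ := hh
  have hi : a ^ i = h := hi
  have hrot : a = x * h * x⁻¹ * (x⁻¹ * h * x) := calc
    a = x * (x⁻¹ * a * x) * x⁻¹ := by group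
    _ = x * h * x⁻¹ * (x * (x * h * x⁻¹) * x⁻¹) := by rw [hc]; group
    _ = x * h * x⁻¹ * (x⁻¹ * h * x) := by rw [conj_conj_eq_inv_conj hx]
  have hpow : x⁻¹ * h * x = h ^ i * (x * h ^ i * x⁻¹) := calc
    x⁻¹ * h * x = (x⁻¹ * a * x) ^ i := by
      simpa [hi] using (conj_zpow (a := x⁻¹) (b := a) (i := i)).symm
    _ = h ^ i * (x * h ^ i * x⁻¹) := by rw [hc, hcomm.mul_zpow, conj_zpow]
  have hsplit : (h ^ i)⁻¹ * a = x * (h * h ^ i) * x⁻¹ := by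
    rw [inv_mul_eq_iff_eq_mul]
    calc a = x * h * x⁻¹ * (h ^ i * (x * h ^ i * x⁻¹)) := hpow ▸ hrot
      _ = h ^ i * (x * (h * h ^ i) * x⁻¹) := by
        rw [← mul_assoc, ← (hcomm.zpow_left i).eq]
        group
  have hhy : h ∈ Subgroup.zpowers y := hi ▸ zpow_mem ha i
  have hai : (h ^ i)⁻¹ * a = 1 := by
    refine Subgroup.disjoint_def.mp hd (mul_mem (inv_mem (zpow_mem hhy i)) ha) ?_
    rw [hsplit]
    exact conj_mem_zpowers_conj (mul_mem hhy (zpow_mem hhy i))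
  rw [hai, eq_comm, conj_eq_one_iff] at hsplit
  rw [eq_inv_iff_mul_eq_one, ← inv_mul_eq_one.mp hai, hsplit]

theorem commute_diagonal_and_face_relation_of_evenFixer_eq [Finite G] (hx : x ^ 3 = 1)
    (hxy : (x * y) ^ 2 = 1) (hrefl : IsReflexive x y)
    (hd : Disjoint (Subgroup.zpowers y) (Subgroup.zpowers (x * y * x⁻¹)))
    (hden : 4 * Nat.card G < 9 * orderOf y ^ 2) (hK : x ∉ alignedStabilizer x y) {a : G}
    (hE : evenFixer x y = Subgroup.zpowers a) :
    Commute a (x⁻¹ * y ^ 2 * x) ∧ a * (x * a * x⁻¹) * (x⁻¹ * a * x) = 1 := by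
  obtain ⟨σ, hσx, hσy⟩ := hrefl
  have ha : a ∈ evenFixer x y := hE ▸ Subgroup.mem_zpowers a
  have hay := mem_zpowers_of_mem_evenFixer ha
  obtain ⟨k, h, hh, hc⟩ := exists_inv_conj_eq_zpow_mul_conj hx hxy hd hden hK hE
  have hcomm : Commute h (x⁻¹ * y ^ 2 * x) := by
    have := (commute_sq_conj_of_inv_conj_eq (σ := σ) hσx hσy hx hxy hd ha hh hc).symm.map
      (MulAut.conj x⁻¹)
    simpa [mul_assoc] using this
  have hhE : h ∈ evenFixer x y := by
    refine ⟨mem_alignedFixer_of_commute hh hcomm, ?_⟩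
    have hhM : x * h * x⁻¹ ∈ faceStabilizer x y := by
      rw [eq_inv_mul_of_mul_eq hc.symm]
      exact mul_mem (inv_mem (zpow_mem (sq_mem_faceStabilizer hxy) k))
        (inv_conj_mem_faceStabilizer hx ha.2)
    simpa [mul_assoc] using inv_conj_mem_faceStabilizer hx hhM
  have hc' := inv_conj_eq_mul_conj_self (σ := σ) hσx hσy hx hd hay
    (zpow_mem (pow_mem (Subgroup.mem_zpowers y) 2) k) hh hc
  obtain rfl := eq_inv_of_inv_conj_eq_mul_conj hx hd hay (hE ▸ hhE)
    (commute_conj_of_mem_evenFixer hx hd hhE hhE) hc'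
  refine ⟨by simpa using hcomm, ?_⟩
  have hab := commute_conj_of_mem_evenFixer hx hd ha ha
  rw [hc', hab.eq]
  group

theorem pow_evenPeriod_commute_diagonal_and_face_relation [Finite G] (hx : x ^ 3 = 1)
    (hxy : (x * y) ^ 2 = 1) (hrefl : IsReflexive x y) (hsimple : IsSimple x y)
    (hden : 4 * Nat.card G < 9 * orderOf y ^ 2) :
    Commute (y ^ evenPeriod x y) (x⁻¹ * y ^ 2 * x) ∧
      y ^ evenPeriod x y * (x * y ^ evenPeriod x y * x⁻¹) *
        (x⁻¹ * y ^ evenPeriod x y * x) = 1 := by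
  have hd := hsimple.disjoint_zpowers hxy
  by_cases hK : x ∈ alignedStabilizer x y
  · have hfix := pow_evenPeriod_mem_alignedFixer hxy hsimple
    have h1 : y ^ evenPeriod x y = 1 :=
      Subgroup.disjoint_def.mp hd (mem_zpowers_of_mem_alignedFixer hfix)
        (mem_zpowers_conj_iff.mpr (mem_alignedFixer_iff.mp hfix x hK))
    simp [h1]
  · exact commute_diagonal_and_face_relation_of_evenFixer_eq hx hxy hrefl hd hden hK
      (evenFixer_eq_zpowers hx hxy hsimple hK)

end BaseFace

theorem evenPeriod_face_relation_general [Finite G] {x y : G} (hx : x ^ 3 = 1)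
    (hxy : (x * y) ^ 2 = 1) (hrefl : IsReflexive x y) (hsimple : IsSimple x y)
    (hden : 4 * Nat.card G < 9 * orderOf y ^ 2) :
    (∀ v v' : Vertex y, DiagNeighbor x y v v' →
      rot y v ^ evenPeriod x y = rot y v' ^ evenPeriod x y) ∧
    ∀ g : G,
      rot y (QuotientGroup.mk g : Vertex y) ^ evenPeriod x y *
        rot y (QuotientGroup.mk (g * x) : Vertex y) ^ evenPeriod x y *
        rot y (QuotientGroup.mk (g * x ^ 2) : Vertex y) ^ evenPeriod x y = 1 := by
  obtain ⟨hcomm, hface⟩ :=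
    pow_evenPeriod_commute_diagonal_and_face_relation hx hxy hrefl hsimple hden
  refine ⟨fun v v' hvv' => ?_, fun g => ?_⟩
  · obtain ⟨g, rfl, rfl⟩ := (diagNeighbor_iff hxy hsimple).mp hvv'
    rw [rot_mk_pow, rot_mk_pow, mul_assoc g (_ * x), ← hcomm.eq]
    group
  · have hx2 : x ^ 2 = x⁻¹ := by rw [pow_two, mul_self_eq_inv_s11 hx]
    simp only [rot_mk_pow, hx2]
    calc _ = g * (y ^ evenPeriod x y * (x * y ^ evenPeriod x y * x⁻¹) *
          (x⁻¹ * y ^ evenPeriod x y * x)) * g⁻¹ := by group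
      _ = 1 := by rw [hface, mul_one, mul_inv_cancel]

/-- For a non-tetrahedral map as above: `S_v^T = S_{v'}^T` for diagonal neighbours,
and `S_v^T · S_u^T · S_w^T = 1` for the three vertices of any face. -/
theorem evenPeriod_face_relation
    (G : Type*) [Group G] [Finite G] (x y : G)
    (hgen : Subgroup.closure {x, y} = ⊤) (hxy : (x * y) ^ 2 = 1)
    (hrefl : IsReflexive x y) (hsimple : IsSimple x y)
    (hden : 2 * orderOf y ^ 2 > Nat.card G) (hp : orderOf x = 3)
    (hnt : ¬ IsTet G x y) :
    (∀ v v' : Vertex y, DiagNeighbor x y v v' →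
      rot y v ^ evenPeriod x y = rot y v' ^ evenPeriod x y) ∧
    ∀ g : G,
      rot y (QuotientGroup.mk g : Vertex y) ^ evenPeriod x y *
        rot y (QuotientGroup.mk (g * x) : Vertex y) ^ evenPeriod x y *
        rot y (QuotientGroup.mk (g * x ^ 2) : Vertex y) ^ evenPeriod x y = 1 := by
  exact evenPeriod_face_relation_general (hp ▸ pow_orderOf_eq_one x) hxy hrefl hsimple (by lia)

end RegularMap
end
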